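/- arXiv:1602.05940 — 10 statements merged into one kernel-verified Lean document; each statement's English description precedes it below -/
import Mathlib

section
/- For every m-OCA A over a nonempty finite alphabet Σ with state set Q, there exists a deterministic m-OCA A' over Σ with at most 2^{|Q|} states such that L_oca(A') = L_oca(A), L_vis(A') = L_vis(A), and L_obs(A') = L_obs(A). -/
/-! Common framework: one-counter automata (OCAs) over a finite alphabet,
with the classical (`oca`), visibly (`vis`) and observability (`obs`) semantics. -/

/-- Letters from an alphabet `α` together with the two counter operations
`inc` and `dec`. -/
inductive Vis (α : Type*) : Type _ where
  | sym : α → Vis α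
  | inc : Vis α
  | dec : Vis α

/-- A one-counter automaton (an `m`-OCA) over alphabet `α` with state set `Q`:
an initial state, a set of final states, a threshold `m`, and a transition
relation `Δ ⊆ Q × {0,…,m} × (α ∪ {inc,dec}) × Q`. -/
structure OCA (Q : Type*) (α : Type*) where
  init : Q
  final : Set Q
  m : ℕ
  Δ : Set (Q × ℕ × Vis α × Q)
  valid : ∀ t ∈ Δ, t.2.1 ≤ m

variable {Q α : Type*}

/-- One step of an OCA, labeled by an element of `(α × ℕ) ∪ {inc, dec}`. -/
def OCA.step (A : OCA Q α) : Q × ℕ → Vis (α × ℕ) → Q × ℕ → Prop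
  | (q, x), Vis.inc, (q', x') => x' = x + 1 ∧ (q, min x A.m, Vis.inc, q') ∈ A.Δ
  | (q, x), Vis.dec, (q', x') => 1 ≤ x ∧ x' = x - 1 ∧ (q, min x A.m, Vis.dec, q') ∈ A.Δ
  | (q, x), Vis.sym (a, y), (q', x') => y = x ∧ x' = x ∧ (q, min x A.m, Vis.sym a, q') ∈ A.Δ

/-- `A.RunFrom c ts cs` holds if there is a partial run of `A` starting in
configuration `c`, with trace `ts`, visiting exactly the configurations
listed in `cs` (starting with `c`). -/
inductive OCA.RunFrom (A : OCA Q α) : Q × ℕ → List (Vis (α × ℕ)) → List (Q × ℕ) → Prop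
  | nil (c : Q × ℕ) : OCA.RunFrom A c [] [c]
  | cons {c c' : Q × ℕ} {τ : Vis (α × ℕ)} {ts : List (Vis (α × ℕ))} {cs : List (Q × ℕ)} :
      A.step c τ c' → OCA.RunFrom A c' ts cs → OCA.RunFrom A c (τ :: ts) (c :: cs)

/-- `ts` is the trace of some accepting run of `A` (a run starting in the
initial configuration `(ι,0)` whose last configuration has a final state). -/
def OCA.AccTrace (A : OCA Q α) (ts : List (Vis (α × ℕ))) : Prop :=
  ∃ cs c, A.RunFrom (A.init, 0) ts cs ∧ cs.getLast? = some c ∧ c.1 ∈ A.final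

/-- Projection of a trace letter used for the visibly semantics:
`(a,x)` becomes `a`, and `inc`/`dec` are kept. -/
def visOf : Vis (α × ℕ) → Vis α
  | Vis.sym (a, _) => Vis.sym a
  | Vis.inc => Vis.inc
  | Vis.dec => Vis.dec

/-- The visibly projection of a trace. -/
def visMap (ts : List (Vis (α × ℕ))) : List (Vis α) := ts.map visOf

/-- The observability projection of a trace: keep the pairs `(a,x)`,
erase `inc`/`dec`. -/
def obsMap (ts : List (Vis (α × ℕ))) : List (α × ℕ) :=
  ts.filterMap fun τ => match τ with
    | Vis.sym p => some p
    | _ => none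

/-- The classical projection of a trace: `(a,x)` becomes `a`,
`inc`/`dec` are erased. -/
def ocaMap (ts : List (Vis (α × ℕ))) : List α :=
  ts.filterMap fun τ => match τ with
    | Vis.sym (a, _) => some a
    | _ => none

/-- The visibly semantics `L_vis(A)`. -/
def OCA.Lvis (A : OCA Q α) : Set (List (Vis α)) :=
  {w | ∃ ts, A.AccTrace ts ∧ visMap ts = w}

/-- The observability semantics `L_obs(A)`. -/
def OCA.Lobs (A : OCA Q α) : Set (List (α × ℕ)) :=
  {w | ∃ ts, A.AccTrace ts ∧ obsMap ts = w}

/-- The classical semantics `L_oca(A)`. -/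
def OCA.Loca (A : OCA Q α) : Set (List α) :=
  {w | ∃ ts, A.AccTrace ts ∧ ocaMap ts = w}

/-- An OCA is deterministic if for every state `q`, counter test `k ≤ m` and
letter `σ ∈ α ∪ {inc,dec}` there is exactly one target state. -/
def OCA.Deterministic (A : OCA Q α) : Prop :=
  ∀ (q : Q) (k : ℕ) (σ : Vis α), k ≤ A.m → ∃! q' : Q, (q, k, σ, q') ∈ A.Δ

/-- Test for the letter `inc`. -/
def isIncB : Vis α → Bool
  | Vis.inc => true
  | _ => false

/-- Test for the letter `dec`. -/
def isDecB : Vis α → Bool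
  | Vis.dec => true
  | _ => false

/-- Well-formed words over `α ∪ {inc,dec}`: no prefix contains more `dec`'s
than `inc`'s. -/
def WFWords (α : Type*) : Set (List (Vis α)) :=
  {w | ∀ p, p <+: w → p.countP isDecB ≤ p.countP isIncB}

/-- `encFrom x0 w` encodes `w ∈ (α × ℕ)*` starting from previous counter
value `x0`: each `(a,x)` becomes `inc^(x-x0) a` (if `x ≥ x0`) or
`dec^(x0-x) a` (otherwise). -/
def encFrom : ℕ → List (α × ℕ) → List (Vis α)
  | _, [] => []
  | x0, (a, x) :: w =>
      (if x0 ≤ x then List.replicate (x - x0) Vis.inc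
       else List.replicate (x0 - x) Vis.dec) ++ Vis.sym a :: encFrom x w

/-- The encoding `enc : (α × ℕ)* → (α ∪ {inc,dec})*`. -/
def enc (w : List (α × ℕ)) : List (Vis α) := encFrom 0 w

/-- The set `Enc_α` of valid encodings. -/
def EncSet (α : Type*) : Set (List (Vis α)) := Set.range (enc (α := α))

/-- A set `S ⊆ ℕ` is ultimately periodic if there are `t` and `d ≥ 1` such
that for all `x ≥ t`, `x ∈ S ↔ x + d ∈ S`. -/
def UltPeriodic (S : Set ℕ) : Prop :=
  ∃ t d : ℕ, 1 ≤ d ∧ ∀ x : ℕ, t ≤ x → (x ∈ S ↔ x + d ∈ S)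

/-- An extended OCA (eOCA): transitions are guarded by ultimately periodic
sets of counter values, and acceptance is given by an ultimately periodic set
of counter values for each state. -/
structure EOCA (Q : Type*) (α : Type*) where
  init : Q
  f : Q → Set ℕ
  hf : ∀ q, UltPeriodic (f q)
  Δ : Set (Q × Set ℕ × Vis α × Q)
  hΔfin : Δ.Finite
  hΔup : ∀ t ∈ Δ, UltPeriodic t.2.1

/-- One step of an eOCA. -/
def EOCA.step (A : EOCA Q α) : Q × ℕ → Vis (α × ℕ) → Q × ℕ → Prop
  | (q, x), Vis.inc, (q', x') =>
      x' = x + 1 ∧ ∃ S, (q, S, Vis.inc, q') ∈ A.Δ ∧ x ∈ S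
  | (q, x), Vis.dec, (q', x') =>
      1 ≤ x ∧ x' = x - 1 ∧ ∃ S, (q, S, Vis.dec, q') ∈ A.Δ ∧ x ∈ S
  | (q, x), Vis.sym (a, y), (q', x') =>
      y = x ∧ x' = x ∧ ∃ S, (q, S, Vis.sym a, q') ∈ A.Δ ∧ x ∈ S

/-- Partial runs of an eOCA, as for OCAs. -/
inductive EOCA.RunFrom (A : EOCA Q α) : Q × ℕ → List (Vis (α × ℕ)) → List (Q × ℕ) → Prop
  | nil (c : Q × ℕ) : EOCA.RunFrom A c [] [c]
  | cons {c c' : Q × ℕ} {τ : Vis (α × ℕ)} {ts : List (Vis (α × ℕ))} {cs : List (Q × ℕ)} :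
      A.step c τ c' → EOCA.RunFrom A c' ts cs → EOCA.RunFrom A c (τ :: ts) (c :: cs)

/-- Accepting traces of an eOCA: the last configuration `(q,x)` satisfies
`x ∈ f q`. -/
def EOCA.AccTrace (A : EOCA Q α) (ts : List (Vis (α × ℕ))) : Prop :=
  ∃ cs c, A.RunFrom (A.init, 0) ts cs ∧ cs.getLast? = some c ∧ c.2 ∈ A.f c.1

/-- The visibly semantics of an eOCA. -/
def EOCA.Lvis (A : EOCA Q α) : Set (List (Vis α)) :=
  {w | ∃ ts, A.AccTrace ts ∧ visMap ts = w}

/-- The observability semantics of an eOCA. -/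
def EOCA.Lobs (A : EOCA Q α) : Set (List (α × ℕ)) :=
  {w | ∃ ts, A.AccTrace ts ∧ obsMap ts = w}

/-- The classical semantics of an eOCA. -/
def EOCA.Loca (A : EOCA Q α) : Set (List α) :=
  {w | ∃ ts, A.AccTrace ts ∧ ocaMap ts = w}

def OCA.AccFrom (A : OCA Q α) (c : Q × ℕ) (ts : List (Vis (α × ℕ))) : Prop :=
  ∃ cs d, A.RunFrom c ts cs ∧ cs.getLast? = some d ∧ d.1 ∈ A.final

theorem OCA.accFrom_nil (A : OCA Q α) (c : Q × ℕ) : A.AccFrom c [] ↔ c.1 ∈ A.final := by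
  constructor
  · rintro ⟨cs, d, h, h1, h2⟩
    cases h
    simp at h1
    subst h1
    exact h2
  · intro h
    exact ⟨[c], c, .nil c, by simp, h⟩

theorem OCA.accFrom_cons (A : OCA Q α) (c : Q × ℕ) (τ : Vis (α × ℕ)) (ts) :
    A.AccFrom c (τ :: ts) ↔ ∃ c', A.step c τ c' ∧ A.AccFrom c' ts := by
  constructor
  · rintro ⟨cs, d, h, h1, h2⟩
    cases h with
    | @cons _ c' _ _ cs hs hr =>
      refine ⟨c', hs, cs, d, hr, ?_, h2⟩
      cases hr <;> simpa [List.getLast?_cons_cons] using h1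
  · rintro ⟨c', hs, cs, d, hr, h1, h2⟩
    refine ⟨c :: cs, d, .cons hs hr, ?_, h2⟩
    cases hr <;> simpa [List.getLast?_cons_cons] using h1

/-- Powerset automaton. -/
def OCA.det (A : OCA Q α) : OCA (Set Q) α where
  init := {A.init}
  final := {S | ∃ q ∈ S, q ∈ A.final}
  m := A.m
  Δ := {t | t.2.1 ≤ A.m ∧ t.2.2.2 = {q' | ∃ q ∈ t.1, (q, t.2.1, t.2.2.1, q') ∈ A.Δ}}
  valid := fun _ h => h.1

theorem OCA.det_accFrom (A : OCA Q α) (ts : List (Vis (α × ℕ))) :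
    ∀ (S : Set Q) (x : ℕ), A.det.AccFrom (S, x) ts ↔ ∃ q ∈ S, A.AccFrom (q, x) ts := by
  induction ts with
  | nil => intro S x; simp only [OCA.accFrom_nil]; rfl
  | cons τ ts ih =>
    intro S x
    simp only [OCA.accFrom_cons]
    constructor
    · rintro ⟨⟨S', x'⟩, hs, ha⟩
      obtain ⟨q', hq', hb⟩ := (ih S' x').1 ha
      rcases τ with ⟨a, y⟩ | _ | _
      · obtain ⟨h1, h2, -, h3⟩ := hs
        dsimp only at h3
        subst h3
        obtain ⟨q, hq, hd⟩ := hq'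
        exact ⟨q, hq, (q', x'), ⟨h1, h2, hd⟩, hb⟩
      · obtain ⟨h2, -, h3⟩ := hs
        dsimp only at h3
        subst h3
        obtain ⟨q, hq, hd⟩ := hq'
        exact ⟨q, hq, (q', x'), ⟨h2, hd⟩, hb⟩
      · obtain ⟨h1, h2, -, h3⟩ := hs
        dsimp only at h3
        subst h3
        obtain ⟨q, hq, hd⟩ := hq'
        exact ⟨q, hq, (q', x'), ⟨h1, h2, hd⟩, hb⟩
    · rintro ⟨q, hq, ⟨q', x'⟩, hs, ha⟩
      refine ⟨({q' | ∃ q ∈ S, (q, min x A.m, visOf τ, q') ∈ A.Δ}, x'), ?_, (ih _ _).2 ⟨q', ?_, ha⟩⟩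
      · rcases τ with ⟨a, y⟩ | _ | _
        · exact ⟨hs.1, hs.2.1, min_le_right _ _, rfl⟩
        · exact ⟨hs.1, min_le_right _ _, rfl⟩
        · exact ⟨hs.1, hs.2.1, min_le_right _ _, rfl⟩
      · rcases τ with ⟨a, y⟩ | _ | _
        · exact ⟨q, hq, hs.2.2⟩
        · exact ⟨q, hq, hs.2⟩
        · exact ⟨q, hq, hs.2.2⟩

theorem OCA.det_accTrace (A : OCA Q α) : A.det.AccTrace = A.AccTrace := by
  funext ts
  have h := A.det_accFrom ts {A.init} 0
  simp only [Set.mem_singleton_iff, exists_eq_left] at h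
  exact propext h

/-- determinization of OCAs (powerset construction), preserving
all three semantics, with at most `2^|Q|` states. -/
theorem stmt1 {α Q : Type} [Fintype α] [Nonempty α] [Fintype Q] (A : OCA Q α) :
    ∃ (Q' : Type) (_ : Fintype Q') (A' : OCA Q' α),
      Fintype.card Q' ≤ 2 ^ Fintype.card Q ∧
      A'.m = A.m ∧
      A'.Deterministic ∧
      A'.Loca = A.Loca ∧ A'.Lvis = A.Lvis ∧ A'.Lobs = A.Lobs := by
  classical
  refine ⟨Set Q, inferInstance, A.det, by simp, rfl, ?_, ?_, ?_, ?_⟩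
  · intro S k σ hk
    exact ⟨{q' | ∃ q ∈ S, (q, k, σ, q') ∈ A.Δ}, ⟨hk, rfl⟩, fun S' h => h.2⟩
  · simp only [OCA.Loca, A.det_accTrace]
  · simp only [OCA.Lvis, A.det_accTrace]
  · simp only [OCA.Lobs, A.det_accTrace]
end

section
/- For every nonempty finite alphabet Σ there exists a deterministic 0-OCA B over Σ with at most four states such that L_vis(B) = Enc_Σ, the set of valid encodings. -/
variable {Q α : Type*}

/-- Transition function of the four-state automaton: `0` = just read a letter,
`1` = incrementing, `2` = decrementing, `3` = sink. -/
def dl4 {α : Type} (q : Fin 4) : Vis α → Fin 4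
  | Vis.sym _ => if q = 3 then 3 else 0
  | Vis.inc => if q = 0 ∨ q = 1 then 1 else 3
  | Vis.dec => if q = 0 ∨ q = 2 then 2 else 3

/-- The automaton. -/
def B4 (α : Type) : OCA (Fin 4) α where
  init := 0
  final := {0}
  m := 0
  Δ := {t | t.2.1 = 0 ∧ t.2.2.2 = dl4 t.1 t.2.2.1}
  valid := by
    rintro t ⟨h, _⟩
    exact h.le

/-- Functional acceptance. -/
def acc4 {α : Type} : Fin 4 → ℕ → List (Vis α) → Prop
  | q, _, [] => q = 0
  | q, x, Vis.sym a :: w => acc4 (dl4 q (Vis.sym a : Vis α)) x w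
  | q, x, Vis.inc :: w => acc4 (dl4 q (Vis.inc : Vis α)) (x + 1) w
  | q, x, Vis.dec :: w => 1 ≤ x ∧ acc4 (dl4 q (Vis.dec : Vis α)) (x - 1) w

theorem runFrom_ne {Q α : Type} {A : OCA Q α} {c ts cs} (h : A.RunFrom c ts cs) : cs ≠ [] := by
  cases h <;> simp

theorem acc4_of_run {α : Type} {c ts cs} (h : (B4 α).RunFrom c ts cs) :
    ∀ d, cs.getLast? = some d → d.1 = 0 → acc4 c.1 c.2 (visMap ts) := by
  induction h with
  | nil c =>
    intro d hd h0
    simp at hd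
    subst hd
    simpa [visMap, acc4] using h0
  | @cons c c' τ ts cs hs hr ih =>
    intro d hd h0
    have hne := runFrom_ne hr
    obtain ⟨e, cs, rfl⟩ := List.exists_cons_of_ne_nil hne
    rw [List.getLast?_cons_cons] at hd
    have := ih d hd h0
    obtain ⟨q, x⟩ := c
    obtain ⟨q', x'⟩ := c'
    rcases τ with ⟨a, y⟩ | _ | _
    · obtain ⟨rfl, rfl, -, h⟩ := hs
      simp only at h
      subst h
      simpa [visMap, visOf, acc4] using this
    · obtain ⟨rfl, -, h⟩ := hs
      simp only at h
      subst h
      simpa [visMap, visOf, acc4] using this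
    · obtain ⟨h1, rfl, -, h⟩ := hs
      simp only at h
      subst h
      exact ⟨h1, by simpa [visMap, visOf, acc4] using this⟩

theorem run_of_acc4 {α : Type} (w : List (Vis α)) : ∀ q x, acc4 q x w →
    ∃ ts cs c, (B4 α).RunFrom (q, x) ts cs ∧ cs.getLast? = some c ∧ c.1 = 0 ∧ visMap ts = w := by
  induction w with
  | nil =>
    intro q x h
    exact ⟨[], _, (q, x), .nil _, rfl, h, rfl⟩
  | cons σ w ih =>
    intro q x h
    have key : ∀ (q' : Fin 4) (x' : ℕ) (τ : Vis (α × ℕ)), (B4 α).step (q, x) τ (q', x') →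
        visOf τ = σ → acc4 q' x' w → ∃ ts cs c, (B4 α).RunFrom (q, x) ts cs ∧
          cs.getLast? = some c ∧ c.1 = 0 ∧ visMap ts = σ :: w := by
      intro q' x' τ hs hv ha
      obtain ⟨ts, cs, c, hr, hl, h0, hm⟩ := ih q' x' ha
      refine ⟨τ :: ts, _, c, .cons hs hr, ?_, h0, ?_⟩
      · obtain ⟨e, cs, rfl⟩ := List.exists_cons_of_ne_nil (runFrom_ne hr)
        rw [List.getLast?_cons_cons, hl]
      · rw [← hm, ← hv]
        rfl
    rcases σ with a | _ | _
    · exact key _ x (Vis.sym (a, x)) ⟨rfl, rfl, by simp [B4], rfl⟩ rfl h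
    · exact key _ (x + 1) Vis.inc ⟨rfl, by simp [B4], rfl⟩ rfl h
    · exact key _ (x - 1) Vis.dec ⟨h.1, rfl, by simp [B4], rfl⟩ rfl h.2

theorem acc4_three {α : Type} (w : List (Vis α)) : ∀ x, ¬ acc4 3 x w := by
  induction w with
  | nil => intro x; simp [acc4]
  | cons σ w ih => rcases σ with a | _ | _ <;> intro x <;> simp [acc4, dl4, ih]

theorem acc4_sound {α : Type} (w : List (Vis α)) : ∀ x,
    (acc4 0 x w → ∃ v, encFrom x v = w) ∧
    (acc4 1 x w → ∃ a n v, w = List.replicate n Vis.inc ++ Vis.sym a :: encFrom (x + n) v) ∧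
    (acc4 2 x w → ∃ a n v, n ≤ x ∧
      w = List.replicate n Vis.dec ++ Vis.sym a :: encFrom (x - n) v) := by
  induction w with
  | nil =>
    intro x
    refine ⟨fun _ => ⟨[], rfl⟩, ?_, ?_⟩ <;> simp [acc4]
  | cons σ w ih =>
    intro x
    rcases σ with a | _ | _
    · refine ⟨fun h => ?_, fun h => ?_, fun h => ?_⟩
      · obtain ⟨v, rfl⟩ := (ih x).1 (by simpa [acc4, dl4] using h)
        exact ⟨(a, x) :: v, by simp [encFrom]⟩
      · obtain ⟨v, rfl⟩ := (ih x).1 (by simpa [acc4, dl4] using h)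
        exact ⟨a, 0, v, by simp⟩
      · obtain ⟨v, rfl⟩ := (ih x).1 (by simpa [acc4, dl4] using h)
        exact ⟨a, 0, v, by simp⟩
    · refine ⟨fun h => ?_, fun h => ?_, fun h => ?_⟩
      · obtain ⟨a, n, v, rfl⟩ := (ih (x + 1)).2.1 (by simpa [acc4, dl4] using h)
        refine ⟨(a, x + 1 + n) :: v, ?_⟩
        have e : x + 1 + n - x = n + 1 := by omega
        have e' : x ≤ x + 1 + n := by omega
        simp [encFrom, e, e', List.replicate_succ]
      · obtain ⟨a, n, v, rfl⟩ := (ih (x + 1)).2.1 (by simpa [acc4, dl4] using h)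
        refine ⟨a, n + 1, v, ?_⟩
        have e : x + (n + 1) = x + 1 + n := by omega
        simp [e, List.replicate_succ]
      · exact absurd (by simpa [acc4, dl4] using h) (acc4_three w (x + 1))
    · refine ⟨fun h => ?_, fun h => ?_, fun h => ?_⟩
      · obtain ⟨h1, h⟩ := h
        obtain ⟨a, n, v, hn, rfl⟩ := (ih (x - 1)).2.2 (by simpa [dl4] using h)
        refine ⟨(a, x - 1 - n) :: v, ?_⟩
        have e : x - (x - 1 - n) = n + 1 := by omega
        have e' : ¬ x ≤ x - 1 - n := by omega
        rw [encFrom, if_neg e', e]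
        simp [List.replicate_succ]
      · obtain ⟨h1, h⟩ := h
        exact absurd (by simpa [dl4] using h) (acc4_three w (x - 1))
      · obtain ⟨h1, h⟩ := h
        obtain ⟨a, n, v, hn, rfl⟩ := (ih (x - 1)).2.2 (by simpa [dl4] using h)
        refine ⟨a, n + 1, v, by omega, ?_⟩
        have e : x - (n + 1) = x - 1 - n := by omega
        rw [e]
        simp [List.replicate_succ]

theorem acc4_inc {α : Type} (a : α) (w : List (Vis α)) (n : ℕ) : ∀ q x, (q = 0 ∨ q = 1) →
    acc4 0 (x + n) w → acc4 q x (List.replicate n Vis.inc ++ Vis.sym a :: w) := by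
  induction n with
  | zero => rintro q x (rfl | rfl) h <;> simpa [acc4, dl4] using h
  | succ n ih =>
    intro q x hq h
    have := ih 1 (x + 1) (Or.inr rfl) (by rwa [show x + 1 + n = x + (n + 1) by omega])
    simpa [List.replicate_succ, acc4, dl4, hq] using this

theorem acc4_dec {α : Type} (a : α) (w : List (Vis α)) (n : ℕ) : ∀ q x, (q = 0 ∨ q = 2) →
    n ≤ x → acc4 0 (x - n) w → acc4 q x (List.replicate n Vis.dec ++ Vis.sym a :: w) := by
  induction n with
  | zero => rintro q x (rfl | rfl) _ h <;> simpa [acc4, dl4] using h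
  | succ n ih =>
    intro q x hq hn h
    have := ih 2 (x - 1) (Or.inr rfl) (by omega) (by rwa [show x - 1 - n = x - (n + 1) by omega])
    refine ⟨by omega, ?_⟩
    simpa [dl4, hq] using this

theorem acc4_complete {α : Type} (v : List (α × ℕ)) : ∀ x, acc4 0 x (encFrom x v) := by
  induction v with
  | nil => intro x; simp [encFrom, acc4]
  | cons p v ih =>
    intro x
    obtain ⟨a, y⟩ := p
    rw [encFrom]
    split_ifs with h
    · exact acc4_inc a _ _ 0 x (Or.inl rfl) (by rw [show x + (y - x) = y by omega]; exact ih y)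
    · exact acc4_dec a _ _ 0 x (Or.inl rfl) (by omega)
        (by rw [show x - (x - y) = y by omega]; exact ih y)

/-- there is a deterministic 0-OCA with at most four states whose
visibly semantics is the set of valid encodings. -/
theorem stmt4 {α : Type} [Fintype α] [Nonempty α] :
    ∃ (Q : Type) (_ : Fintype Q) (B : OCA Q α),
      Fintype.card Q ≤ 4 ∧ B.m = 0 ∧ B.Deterministic ∧ B.Lvis = EncSet α := by
  refine ⟨Fin 4, inferInstance, B4 α, by simp, rfl, ?_, ?_⟩
  · intro q k σ hk
    have hk : k = 0 := Nat.le_zero.mp hk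
    exact ⟨dl4 q σ, ⟨hk, rfl⟩, fun y hy => hy.2⟩
  · ext w
    constructor
    · rintro ⟨ts, ⟨cs, c, hr, hl, hf⟩, rfl⟩
      exact (acc4_sound _ 0).1 (acc4_of_run hr c hl hf)
    · rintro ⟨v, rfl⟩
      obtain ⟨ts, cs, c, hr, hl, h0, hm⟩ := run_of_acc4 _ 0 0 (acc4_complete v 0)
      exact ⟨ts, ⟨cs, c, hr, hl, h0⟩, hm⟩
end

section
/- The map enc : (Σ×ℕ)* → (Σ ∪ {inc,dec})* is injective, and its image Enc_Σ equals the set of all words of the form u1 a1 u2 a2 ⋯ un an (n ≥ 0) with each ai ∈ Σ and each ui ∈ {inc}* ∪ {dec}*, such that no prefix of the word contains more occurrences of dec than of inc. -/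
variable {Q α : Type*}

def decF {α : Type} : ℕ → List (Vis α) → List (α × ℕ)
  | _, [] => []
  | x, Vis.inc :: w => decF (x + 1) w
  | x, Vis.dec :: w => decF (x - 1) w
  | x, Vis.sym a :: w => (a, x) :: decF x w

theorem decF_inc {α : Type} (n x : ℕ) (w : List (Vis α)) :
    decF x (List.replicate n Vis.inc ++ w) = decF (x + n) w := by
  induction n generalizing x with
  | zero => simp
  | succ n ih =>
    rw [List.replicate_succ, List.cons_append, decF, ih]
    congr 1; omega

theorem decF_dec {α : Type} (n x : ℕ) (w : List (Vis α)) :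
    decF x (List.replicate n Vis.dec ++ w) = decF (x - n) w := by
  induction n generalizing x with
  | zero => simp
  | succ n ih =>
    rw [List.replicate_succ, List.cons_append, decF, ih]
    congr 1; omega

theorem decF_encFrom {α : Type} (w : List (α × ℕ)) (x : ℕ) :
    decF x (encFrom x w) = w := by
  induction w generalizing x with
  | nil => simp [encFrom, decF]
  | cons p w ih =>
    obtain ⟨a, y⟩ := p
    rw [encFrom]
    split_ifs with h
    · rw [decF_inc, decF, show x + (y - x) = y by omega, ih]
    · rw [decF_dec, decF, show x - (x - y) = y by omega, ih]

def WFx {α : Type} (x : ℕ) (w : List (Vis α)) : Prop :=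
  ∀ p, p <+: w → p.countP isDecB ≤ x + p.countP isIncB

theorem WFx_nil {α : Type} (x : ℕ) : WFx x ([] : List (Vis α)) := by
  intro p hp
  rw [List.prefix_nil] at hp
  subst hp; simp

theorem WFx_sym {α : Type} (x : ℕ) (a : α) (w : List (Vis α)) :
    WFx x (Vis.sym a :: w) ↔ WFx x w := by
  constructor
  · intro h p hp
    have := h (Vis.sym a :: p) (by simpa using hp)
    simpa [isDecB, isIncB] using this
  · intro h p hp
    rcases List.prefix_cons_iff.1 hp with rfl | ⟨t, rfl, ht⟩
    · simp
    · have := h t ht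
      simpa [isDecB, isIncB] using this

theorem WFx_inc1 {α : Type} (x : ℕ) (w : List (Vis α)) :
    WFx x (Vis.inc :: w) ↔ WFx (x + 1) w := by
  constructor
  · intro h p hp
    have := h (Vis.inc :: p) (by simpa using hp)
    simp [List.countP_cons, isDecB, isIncB] at this
    omega
  · intro h p hp
    rcases List.prefix_cons_iff.1 hp with rfl | ⟨t, rfl, ht⟩
    · simp
    · have := h t ht
      simp [List.countP_cons, isDecB, isIncB]
      omega

theorem WFx_dec1 {α : Type} (x : ℕ) (w : List (Vis α)) :
    WFx x (Vis.dec :: w) ↔ 1 ≤ x ∧ WFx (x - 1) w := by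
  constructor
  · intro h
    have h1 : 1 ≤ x := by
      have := h [Vis.dec] (by simp)
      simpa [isDecB, isIncB] using this
    refine ⟨h1, fun p hp => ?_⟩
    have := h (Vis.dec :: p) (by simpa using hp)
    simp [List.countP_cons, isDecB, isIncB] at this
    omega
  · rintro ⟨h1, h⟩ p hp
    rcases List.prefix_cons_iff.1 hp with rfl | ⟨t, rfl, ht⟩
    · simp
    · have := h t ht
      simp [List.countP_cons, isDecB, isIncB]
      omega

theorem WFx_inc {α : Type} (n x : ℕ) (w : List (Vis α)) :
    WFx x (List.replicate n Vis.inc ++ w) ↔ WFx (x + n) w := by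
  induction n generalizing x with
  | zero => simp
  | succ n ih =>
    rw [List.replicate_succ, List.cons_append, WFx_inc1, ih,
      show x + 1 + n = x + (n + 1) by omega]

theorem WFx_dec {α : Type} (n x : ℕ) (w : List (Vis α)) :
    WFx x (List.replicate n Vis.dec ++ w) ↔ n ≤ x ∧ WFx (x - n) w := by
  induction n generalizing x with
  | zero => simp
  | succ n ih =>
    rw [List.replicate_succ, List.cons_append, WFx_dec1, ih,
      show x - 1 - n = x - (n + 1) by omega, ← and_assoc]
    have : (1 ≤ x ∧ n ≤ x - 1) ↔ n + 1 ≤ x := by omega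
    rw [this]

theorem WFx_encFrom {α : Type} (w : List (α × ℕ)) (x : ℕ) : WFx x (encFrom x w) := by
  induction w generalizing x with
  | nil => exact WFx_nil x
  | cons p w ih =>
    obtain ⟨a, y⟩ := p
    rw [encFrom]
    split_ifs with h
    · rw [WFx_inc, WFx_sym, show x + (y - x) = y by omega]; exact ih y
    · rw [WFx_dec, WFx_sym, show x - (x - y) = y by omega]; exact ⟨by omega, ih y⟩

theorem form_encFrom {α : Type} (w : List (α × ℕ)) (x : ℕ) :
    ∃ l : List (List (Vis α) × α),
      encFrom x w = (l.map fun p => p.1 ++ [Vis.sym p.2]).flatten ∧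
      ∀ p ∈ l, (∀ τ ∈ p.1, τ = Vis.inc) ∨ (∀ τ ∈ p.1, τ = Vis.dec) := by
  induction w generalizing x with
  | nil => exact ⟨[], by simp [encFrom], by simp⟩
  | cons p w ih =>
    obtain ⟨a, y⟩ := p
    obtain ⟨l, h1, h2⟩ := ih y
    refine ⟨((if x ≤ y then List.replicate (y - x) Vis.inc
       else List.replicate (x - y) Vis.dec), a) :: l, by simp [encFrom, h1], ?_⟩
    intro p hp
    rcases List.mem_cons.1 hp with rfl | hp
    · split_ifs
      · left; intro τ hτ; exact List.eq_of_mem_replicate hτ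
      · right; intro τ hτ; exact List.eq_of_mem_replicate hτ
    · exact h2 p hp

theorem enc_of_form {α : Type} (l : List (List (Vis α) × α)) (x : ℕ)
    (hl : ∀ p ∈ l, (∀ τ ∈ p.1, τ = Vis.inc) ∨ (∀ τ ∈ p.1, τ = Vis.dec))
    (hw : WFx x (l.map fun p => p.1 ++ [Vis.sym p.2]).flatten) :
    ∃ w, encFrom x w = (l.map fun p => p.1 ++ [Vis.sym p.2]).flatten := by
  induction l generalizing x with
  | nil => exact ⟨[], by simp [encFrom]⟩
  | cons p l ih =>
    obtain ⟨u, a⟩ := p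
    have hl' := fun p hp => hl p (List.mem_cons_of_mem _ hp)
    simp only [List.map_cons, List.flatten_cons, List.append_assoc, List.singleton_append]
      at hw ⊢
    rcases hl (u, a) (by simp) with h | h
    · have hu : u = List.replicate u.length Vis.inc := List.eq_replicate_of_mem h
      generalize u.length = n at hu
      subst hu
      rw [WFx_inc, WFx_sym] at hw
      obtain ⟨w, e⟩ := ih _ hl' hw
      exact ⟨(a, x + n) :: w, by simp [encFrom, e]⟩
    · have hu : u = List.replicate u.length Vis.dec := List.eq_replicate_of_mem h
      generalize u.length = n at hu
      subst hu
      rw [WFx_dec, WFx_sym] at hw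
      obtain ⟨hn, hw⟩ := hw
      obtain ⟨w, e⟩ := ih _ hl' hw
      refine ⟨(a, x - n) :: w, ?_⟩
      rw [encFrom, e]
      split_ifs with hx
      · have : n = 0 ∨ x = 0 := by omega
        have : n = 0 := by omega
        subst this; simp
      · rw [show x - (x - n) = n by omega]

/-- `enc` is injective and its image is exactly the set of words
of the form `u₁a₁u₂a₂⋯uₙaₙ` with each `uᵢ ∈ inc* ∪ dec*` such that no prefix
contains more `dec`'s than `inc`'s. -/
theorem stmt5 {α : Type} [Fintype α] [Nonempty α] :
    Function.Injective (enc (α := α)) ∧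
    EncSet α =
      {w | (∃ l : List (List (Vis α) × α),
              w = (l.map fun p => p.1 ++ [Vis.sym p.2]).flatten ∧
              ∀ p ∈ l, (∀ τ ∈ p.1, τ = Vis.inc) ∨ (∀ τ ∈ p.1, τ = Vis.dec)) ∧
           ∀ p, p <+: w → p.countP isDecB ≤ p.countP isIncB} := by
  refine ⟨fun u v h => ?_, ?_⟩
  · have := congrArg (decF 0) h
    simpa only [enc, decF_encFrom] using this
  · ext w
    constructor
    · rintro ⟨v, rfl⟩
      refine ⟨form_encFrom v 0, fun p hp => ?_⟩
      simpa using WFx_encFrom v 0 p hp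
    · rintro ⟨⟨l, rfl, hl⟩, hw⟩
      exact enc_of_form l 0 hl (fun p hp => by simpa using hw p hp)
end

section
/- Let A be an OCA over a nonempty finite alphabet Σ such that L_vis(A) ⊆ Enc_Σ. Then L_vis(A) = {enc(w) : w ∈ L_obs(A)}; equivalently, L_obs(A) = {w ∈ (Σ×ℕ)* : enc(w) ∈ L_vis(A)}. -/
variable {Q α : Type*}

def obsV {α : Type} : ℕ → List (Vis α) → List (α × ℕ)
  | _, [] => []
  | x, Vis.sym a :: w => (a, x) :: obsV x w
  | x, Vis.inc :: w => obsV (x + 1) w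
  | x, Vis.dec :: w => obsV (x - 1) w

theorem obsV_inc {α : Type} (n x : ℕ) (w : List (Vis α)) :
    obsV x (List.replicate n Vis.inc ++ w) = obsV (x + n) w := by
  induction n generalizing x with
  | zero => simp
  | succ n ih =>
    rw [List.replicate_succ, List.cons_append, obsV, ih]
    congr 1; omega

theorem obsV_dec {α : Type} (n x : ℕ) (w : List (Vis α)) :
    obsV x (List.replicate n Vis.dec ++ w) = obsV (x - n) w := by
  induction n generalizing x with
  | zero => simp
  | succ n ih =>
    rw [List.replicate_succ, List.cons_append, obsV, ih]
    congr 1; omega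

theorem obsV_encFrom {α : Type} (w : List (α × ℕ)) (x : ℕ) :
    obsV x (encFrom x w) = w := by
  induction w generalizing x with
  | nil => rfl
  | cons p w ih =>
    obtain ⟨a, y⟩ := p
    rw [encFrom]
    split_ifs with hxy
    · rw [obsV_inc, Nat.add_sub_cancel' hxy, obsV, ih]
    · rw [obsV_dec, Nat.sub_sub_self (by omega), obsV, ih]

theorem obsMap_eq_obsV {α Q : Type} (A : OCA Q α) {c : Q × ℕ} {ts : List (Vis (α × ℕ))}
    {cs : List (Q × ℕ)} (hr : A.RunFrom c ts cs) : obsMap ts = obsV c.2 (visMap ts) := by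
  induction hr with
  | nil c => rfl
  | @cons c c' τ ts cs hs _ ih =>
    obtain ⟨q, x⟩ := c
    obtain ⟨q', x'⟩ := c'
    rcases τ with ⟨a, y⟩ | _ | _
    · obtain ⟨rfl, rfl, _⟩ := hs
      exact congrArg ((a, _) :: ·) ih
    · obtain ⟨rfl, _⟩ := hs
      exact ih
    · obtain ⟨_, rfl, _⟩ := hs
      exact ih

/-- if the visibly semantics of an OCA consists of valid
encodings only, then it is exactly the image of the observability semantics
under `enc`. -/
theorem stmt6 {α Q : Type} [Fintype α] [Nonempty α] [Fintype Q]
    (A : OCA Q α) (h : A.Lvis ⊆ EncSet α) :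
    A.Lvis = enc '' A.Lobs ∧ A.Lobs = {w | enc w ∈ A.Lvis} := by
  have key : ∀ ts, A.AccTrace ts → enc (obsMap ts) = visMap ts := by
    intro ts hts
    obtain ⟨w, hw⟩ := h ⟨ts, hts, rfl⟩
    obtain ⟨cs, c, hr, _⟩ := hts
    rw [obsMap_eq_obsV A hr, ← hw]
    exact congrArg enc (obsV_encFrom w 0)
  constructor
  · ext v
    constructor
    · rintro ⟨ts, hts, rfl⟩
      exact ⟨obsMap ts, ⟨ts, hts, rfl⟩, key ts hts⟩
    · rintro ⟨w, ⟨ts, hts, rfl⟩, rfl⟩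
      exact ⟨ts, hts, (key ts hts).symm⟩
  · ext w
    constructor
    · rintro ⟨ts, hts, rfl⟩
      exact ⟨ts, hts, (key ts hts).symm⟩
    · rintro ⟨ts, hts, hw⟩
      refine ⟨ts, hts, ?_⟩
      obtain ⟨cs, c, hr, _⟩ := hts
      rw [obsMap_eq_obsV A hr, hw]
      exact obsV_encFrom w 0
end

section
/- Let A1, A2, and B be OCAs over the same nonempty finite alphabet Σ such that L_vis(A1) ⊆ Enc_Σ, L_vis(A2) ⊆ Enc_Σ, and L_vis(B) = L_vis(A1) ∩ L_vis(A2). Then L_obs(B) = L_obs(A1) ∩ L_obs(A2). -/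
variable {Q α : Type*}

/-- Decoding of a visible word, starting from a counter value. -/
def decodeFrom {α : Type*} : ℕ → List (Vis α) → List (α × ℕ)
  | _, [] => []
  | x, Vis.inc :: w => decodeFrom (x + 1) w
  | x, Vis.dec :: w => decodeFrom (x - 1) w
  | x, Vis.sym a :: w => (a, x) :: decodeFrom x w

theorem decode_run {Q α : Type*} (A : OCA Q α) {c : Q × ℕ} {ts : List (Vis (α × ℕ))}
    {cs : List (Q × ℕ)} (h : A.RunFrom c ts cs) :
    decodeFrom c.2 (visMap ts) = obsMap ts := by
  induction h with
  | nil c => rfl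
  | @cons c c' τ ts cs hs _ ih =>
    obtain ⟨q, x⟩ := c
    obtain ⟨q', x'⟩ := c'
    rcases τ with ⟨a, y⟩ | _ | _
    · obtain ⟨rfl, rfl, _⟩ := hs
      simp only [visMap, obsMap, List.map_cons, visOf, decodeFrom, List.filterMap_cons] at ih ⊢
      rw [ih]
    · obtain ⟨rfl, _⟩ := hs
      simp only [visMap, obsMap, List.map_cons, visOf, decodeFrom, List.filterMap_cons] at ih ⊢
      rw [ih]
    · obtain ⟨_, rfl, _⟩ := hs
      simp only [visMap, obsMap, List.map_cons, visOf, decodeFrom, List.filterMap_cons] at ih ⊢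
      rw [ih]

theorem decode_inc {α : Type*} (n x : ℕ) (w : List (Vis α)) :
    decodeFrom x (List.replicate n Vis.inc ++ w) = decodeFrom (x + n) w := by
  induction n generalizing x with
  | zero => rfl
  | succ n ih =>
    simp only [List.replicate_succ, List.cons_append, decodeFrom, ih]
    congr 1; omega

theorem decode_dec {α : Type*} (n x : ℕ) (w : List (Vis α)) :
    decodeFrom x (List.replicate n Vis.dec ++ w) = decodeFrom (x - n) w := by
  induction n generalizing x with
  | zero => rfl
  | succ n ih =>
    simp only [List.replicate_succ, List.cons_append, decodeFrom, ih]
    congr 1; omega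

theorem decode_enc {α : Type*} (w : List (α × ℕ)) (x : ℕ) :
    decodeFrom x (encFrom x w) = w := by
  induction w generalizing x with
  | nil => rfl
  | cons p w ih =>
    obtain ⟨a, y⟩ := p
    simp only [encFrom]
    split_ifs with h
    · rw [decode_inc, show x + (y - x) = y by omega, decodeFrom, ih]
    · rw [decode_dec, show x - (x - y) = y by omega, decodeFrom, ih]

theorem mem_Lobs_iff {Q α : Type*} (A : OCA Q α) (w : List (α × ℕ)) :
    w ∈ A.Lobs ↔ ∃ v ∈ A.Lvis, decodeFrom 0 v = w := by
  constructor
  · rintro ⟨ts, hts, rfl⟩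
    refine ⟨visMap ts, ⟨ts, hts, rfl⟩, ?_⟩
    obtain ⟨cs, c, h, _⟩ := hts
    exact decode_run A h
  · rintro ⟨v, ⟨ts, hts, rfl⟩, rfl⟩
    refine ⟨ts, hts, ?_⟩
    obtain ⟨cs, c, h, _⟩ := hts
    exact (decode_run A h).symm

/-- intersection wrt. the visibly semantics yields intersection
wrt. the observability semantics, provided both visibly languages consist of
valid encodings. -/
theorem stmt7 {α Q1 Q2 Q3 : Type} [Fintype α] [Nonempty α]
    [Fintype Q1] [Fintype Q2] [Fintype Q3]
    (A1 : OCA Q1 α) (A2 : OCA Q2 α) (B : OCA Q3 α)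
    (h1 : A1.Lvis ⊆ EncSet α) (h2 : A2.Lvis ⊆ EncSet α)
    (hB : B.Lvis = A1.Lvis ∩ A2.Lvis) :
    B.Lobs = A1.Lobs ∩ A2.Lobs := by
  ext w
  simp only [Set.mem_inter_iff, mem_Lobs_iff, hB]
  constructor
  · rintro ⟨v, ⟨hv1, hv2⟩, hw⟩
    exact ⟨⟨v, hv1, hw⟩, ⟨v, hv2, hw⟩⟩
  · rintro ⟨⟨v1, hv1, hw1⟩, ⟨v2, hv2, hw2⟩⟩
    obtain ⟨u1, rfl⟩ := h1 hv1
    obtain ⟨u2, rfl⟩ := h2 hv2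
    simp only [enc, decode_enc] at hw1 hw2
    subst hw1 hw2
    exact ⟨_, ⟨hv1, hv2⟩, decode_enc _ _⟩
end

section
/- Let A be an OCA over a nonempty finite alphabet Σ and let p, q be states of A. Then both of the following sets are ultimately periodic: X_{p,q} := {x ∈ ℕ : there is a partial run from (p,x) to (q,x) all of whose steps are labeled inc or dec}, and Y_{p,q} := {x ∈ ℕ : there exist x' ∈ ℕ and a partial run from (p,x) to (q,x') all of whose steps are labeled inc or dec}. -/
variable {Q α : Type*}

open Relation

namespace S8

inductive Stp {P : Type} (I D : ℕ → P → P → Prop) : P × ℕ → P × ℕ → Prop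
  | inc {x p q} : I x p q → Stp I D (p, x) (q, x + 1)
  | dec {x p q} : D x p q → Stp I D (p, x + 1) (q, x)

inductive C {P : Type} (I D : ℕ → P → P → Prop) : ℕ → P → P → Prop
  | refl (y p) : C I D y p p
  | trans {y p q r} : C I D y p q → C I D y q r → C I D y p r
  | up {y p r s q} : I y p r → C I D (y + 1) r s → D y s q → C I D y p q

def B {P : Type} (I D : ℕ → P → P → Prop) : ℕ → P → P → Prop
  | 0 => fun p q => p = q
  | y + 1 => ReflTransGen (fun p q => ∃ r s, D y p r ∧ B I D y r s ∧ I y s q)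

def T {P : Type} (I D : ℕ → P → P → Prop) (x : ℕ) : P → P → Prop :=
  ReflTransGen (fun p q => B I D x p q ∨ C I D x p q)

inductive Up {P : Type} (I D : ℕ → P → P → Prop) (p : P) (x : ℕ) : P → ℕ → Prop
  | base {q} : T I D x p q → Up I D p x q x
  | up {y s r q} : Up I D p x s y → I y s r → C I D (y + 1) r q → Up I D p x q (y + 1)

inductive Dn {P : Type} (I D : ℕ → P → P → Prop) (p : P) (x : ℕ) : P → ℕ → Prop
  | base {q} : T I D x p q → Dn I D p x q x
  | dn {y s r q} : Dn I D p x s (y + 1) → D y s r → B I D y r q → Dn I D p x q y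

variable {P : Type} {I D : ℕ → P → P → Prop}

lemma B_refl (y : ℕ) (p : P) : B I D y p p := by
  cases y with
  | zero => rfl
  | succ y => exact ReflTransGen.refl

lemma B_trans {y : ℕ} {p q r : P} (h : B I D y p q) (h' : B I D y q r) : B I D y p r := by
  cases y with
  | zero => exact Eq.trans h h'
  | succ y => exact ReflTransGen.trans h h'

lemma Up_le {p q : P} {x y : ℕ} (h : Up I D p x q y) : x ≤ y := by
  induction h with
  | base _ => exact le_rfl
  | up _ _ _ ih => omega

lemma Dn_le {p q : P} {x y : ℕ} (h : Dn I D p x q y) : y ≤ x := by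
  induction h with
  | base _ => exact le_rfl
  | dn _ _ _ ih => omega

lemma Up_C {p q r : P} {x y : ℕ} (h : Up I D p x q y) (h' : C I D y q r) : Up I D p x r y := by
  cases h with
  | base h => exact Up.base (ReflTransGen.tail h (Or.inr h'))
  | up h1 h2 h3 => exact Up.up h1 h2 (C.trans h3 h')

lemma Dn_B {p q r : P} {x y : ℕ} (h : Dn I D p x q y) (h' : B I D y q r) : Dn I D p x r y := by
  cases h with
  | base h => exact Dn.base (ReflTransGen.tail h (Or.inl h'))
  | dn h1 h2 h3 => exact Dn.dn h1 h2 (B_trans h3 h')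

lemma Up_self {p q : P} {x y : ℕ} (h : Up I D p x q y) (e : y = x) : T I D x p q := by
  cases h with
  | base h => exact h
  | up h1 h2 h3 => have := Up_le h1; omega

lemma Dn_self {p q : P} {x y : ℕ} (h : Dn I D p x q y) (e : y = x) : T I D x p q := by
  cases h with
  | base h => exact h
  | dn h1 h2 h3 => have := Dn_le h1; omega

lemma Up_dec {p q r : P} {x y z : ℕ} (h : Up I D p x q z) (e : z = y + 1) (hd : D y q r) :
    Up I D p x r y ∨ Dn I D p x r y := by
  cases h with
  | base h =>
    subst e
    exact Or.inr (Dn.dn (Dn.base h) hd (B_refl _ _))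
  | up h1 h2 h3 =>
    obtain rfl := Nat.succ.inj e
    exact Or.inl (Up_C h1 (C.up h2 h3 hd))

lemma Dn_inc {p q r : P} {x y : ℕ} (h : Dn I D p x q y) (hd : I y q r) :
    Up I D p x r (y + 1) ∨ Dn I D p x r (y + 1) := by
  cases h with
  | base h => exact Or.inl (Up.up (Up.base h) hd (C.refl _ _))
  | dn h1 h2 h3 =>
    exact Or.inr (Dn_B h1 (ReflTransGen.single ⟨_, _, h2, h3, hd⟩))

lemma inv {p : P} {x : ℕ} {c : P × ℕ} (h : ReflTransGen (Stp I D) (p, x) c) :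
    Up I D p x c.1 c.2 ∨ Dn I D p x c.1 c.2 := by
  induction h with
  | refl => exact Or.inl (Up.base ReflTransGen.refl)
  | tail _ hs ih =>
    cases hs with
    | inc hi =>
      rcases ih with ih | ih
      · exact Or.inl (Up.up ih hi (C.refl _ _))
      · exact Dn_inc ih hi
    | dec hd =>
      rcases ih with ih | ih
      · exact Up_dec ih rfl hd
      · exact Or.inr (Dn.dn ih hd (B_refl _ _))

lemma C_sound {y : ℕ} {p q : P} (h : C I D y p q) : ReflTransGen (Stp I D) (p, y) (q, y) := by
  induction h with
  | refl => exact ReflTransGen.refl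
  | trans _ _ h1 h2 => exact h1.trans h2
  | up hi _ hd ih => exact (ReflTransGen.head (Stp.inc hi) ih).tail (Stp.dec hd)

lemma B_sound {y : ℕ} : ∀ {p q : P}, B I D y p q → ReflTransGen (Stp I D) (p, y) (q, y) := by
  induction y with
  | zero => intro p q h; obtain rfl : p = q := h; exact ReflTransGen.refl
  | succ y ih =>
    intro p q h
    have h' : ReflTransGen (fun p q => ∃ r s, D y p r ∧ B I D y r s ∧ I y s q) p q := h
    induction h' with
    | refl => exact ReflTransGen.refl
    | tail h0 hs ih2 =>
      obtain ⟨r, s, h1, h2, h3⟩ := hs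
      exact (ih2 h0).trans ((ReflTransGen.head (Stp.dec h1) (ih h2)).tail (Stp.inc h3))

lemma reach_iff {x : ℕ} {p q : P} : ReflTransGen (Stp I D) (p, x) (q, x) ↔ T I D x p q := by
  constructor
  · intro h
    rcases inv h with h | h
    · exact Up_self h rfl
    · exact Dn_self h rfl
  · intro h
    induction h with
    | refl => exact ReflTransGen.refl
    | tail _ hs ih =>
      rcases hs with h | h
      · exact ih.trans (B_sound h)
      · exact ih.trans (C_sound h)

lemma C_shift {m : ℕ} (hI : ∀ x, m ≤ x → I x = I m) (hD : ∀ x, m ≤ x → D x = D m)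
    {y : ℕ} {p q : P} (h : C I D y p q) : m ≤ y → ∀ z, m ≤ z → C I D z p q := by
  induction h with
  | refl => intro _ z _; exact C.refl _ _
  | trans _ _ h1 h2 => intro hy z hz; exact C.trans (h1 hy z hz) (h2 hy z hz)
  | up hi _ hd ih =>
    intro hy z hz
    refine C.up (y := z) ?_ (ih (by omega) (z + 1) (by omega)) ?_
    · rw [hI z hz, ← hI _ hy]; exact hi
    · rw [hD z hz, ← hD _ hy]; exact hd

lemma main [Finite P] {m : ℕ} (hI : ∀ x, m ≤ x → I x = I m) (hD : ∀ x, m ≤ x → D x = D m)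
    (p q : P) : UltPeriodic {x : ℕ | ReflTransGen (Stp I D) (p, x) (q, x)} := by
  have key : ∃ a d, m ≤ a ∧ 1 ≤ d ∧ B I D a = B I D (a + d) := by
    obtain ⟨i, j, hne, he⟩ := Finite.exists_ne_map_eq_of_infinite (fun n => B I D (m + n))
    rcases lt_or_gt_of_ne hne with h | h
    · refine ⟨m + i, j - i, by omega, by omega, ?_⟩
      rw [show m + i + (j - i) = m + j by omega]; exact he
    · refine ⟨m + j, i - j, by omega, by omega, ?_⟩
      rw [show m + j + (i - j) = m + i by omega]; exact he.symm
  obtain ⟨a, d, ha, hd, hB⟩ := key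
  have hBn : ∀ n, B I D (a + n) = B I D (a + n + d) := by
    intro n
    induction n with
    | zero => exact hB
    | succ n ih =>
      rw [show a + (n + 1) + d = (a + n + d) + 1 by omega, show a + (n + 1) = (a + n) + 1 by omega]
      simp only [B]
      rw [← ih, hI (a + n) (by omega), hD (a + n) (by omega), hI (a + n + d) (by omega),
        hD (a + n + d) (by omega)]
  refine ⟨a, d, hd, fun x hx => ?_⟩
  obtain ⟨n, rfl⟩ := Nat.exists_eq_add_of_le hx
  have hC : C I D (a + n) = C I D (a + n + d) := by
    funext p q
    exact propext ⟨fun h => C_shift hI hD h (by omega) _ (by omega),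
      fun h => C_shift hI hD h (by omega) _ (by omega)⟩
  simp only [Set.mem_ofPred_eq, reach_iff, T]
  rw [← hBn, ← hC]

def AI {α Q : Type} (A : OCA Q α) (x : ℕ) (p q : Q) : Prop := (p, min x A.m, Vis.inc, q) ∈ A.Δ
def AD {α Q : Type} (A : OCA Q α) (x : ℕ) (p q : Q) : Prop :=
  (p, min (x + 1) A.m, Vis.dec, q) ∈ A.Δ

def E {Q : Type} (J : ℕ → Q → Q → Prop) (q₀ : Q) (x : ℕ) : Option Q → Option Q → Prop
  | some p, some q => J x p q
  | some p, none => p = q₀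
  | none, none => True
  | none, some _ => False

lemma run_ne {α Q : Type} {A : OCA Q α} {c ts cs} (h : A.RunFrom c ts cs) : cs ≠ [] := by
  cases h <;> simp

lemma step_iff {α Q : Type} {A : OCA Q α} {c c' : Q × ℕ} :
    Stp (AI A) (AD A) c c' ↔ ∃ τ, A.step c τ c' ∧ (τ = Vis.inc ∨ τ = Vis.dec) := by
  constructor
  · intro h
    cases h with
    | inc h => exact ⟨Vis.inc, ⟨rfl, h⟩, Or.inl rfl⟩
    | dec h => exact ⟨Vis.dec, ⟨by omega, rfl, h⟩, Or.inr rfl⟩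
  · obtain ⟨p, x⟩ := c
    obtain ⟨q, y⟩ := c'
    rintro ⟨τ, h, rfl | rfl⟩
    · obtain ⟨rfl, h⟩ := h
      exact Stp.inc h
    · obtain ⟨h1, h2, h⟩ := h
      obtain ⟨z, rfl⟩ := Nat.exists_eq_add_of_le' h1
      obtain rfl : y = z := h2
      exact Stp.dec h

lemma run_iff {α Q : Type} {A : OCA Q α} {c c' : Q × ℕ} :
    (∃ ts cs, A.RunFrom c ts cs ∧ cs.getLast? = some c' ∧ ∀ τ ∈ ts, τ = Vis.inc ∨ τ = Vis.dec)
      ↔ ReflTransGen (Stp (AI A) (AD A)) c c' := by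
  constructor
  · rintro ⟨ts, cs, h, hl, ht⟩
    induction h with
    | nil c =>
      have : c = c' := by simpa using hl
      subst this
      exact ReflTransGen.refl
    | cons hs hr ih =>
      refine ReflTransGen.head (step_iff.2 ⟨_, hs, ht _ (by simp)⟩)
        (ih ?_ fun τ h => ht τ (by simp [h]))
      rw [← hl]
      obtain ⟨b, l, rfl⟩ := List.exists_cons_of_ne_nil (run_ne hr)
      simp [List.getLast?_cons_cons]
  · intro h
    induction h using ReflTransGen.head_induction_on with
    | refl => exact ⟨[], _, OCA.RunFrom.nil _, by simp, by simp⟩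
    | head hs _ ih =>
      obtain ⟨ts, cs, hr, hl, ht⟩ := ih
      obtain ⟨τ, h1, h2⟩ := step_iff.1 hs
      refine ⟨τ :: ts, _, OCA.RunFrom.cons h1 hr, ?_, ?_⟩
      · rw [← hl]
        obtain ⟨b, l, rfl⟩ := List.exists_cons_of_ne_nil (run_ne hr)
        simp [List.getLast?_cons_cons]
      · intro σ hσ
        rcases List.mem_cons.1 hσ with rfl | h
        · exact h2
        · exact ht _ h

lemma none_move {Q : Type} {J K : ℕ → Q → Q → Prop} {q₀ : Q} (y x : ℕ) :
    ReflTransGen (Stp (E J q₀) (E K q₀)) (none, y) (none, x) := by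
  have up : ∀ y n, ReflTransGen (Stp (E J q₀) (E K q₀)) (none, y) (none, y + n) := by
    intro y n
    induction n with
    | zero => exact ReflTransGen.refl
    | succ n ih => exact ih.tail (Stp.inc (x := y + n) trivial)
  have dn : ∀ y n, ReflTransGen (Stp (E J q₀) (E K q₀)) (none, y + n) (none, y) := by
    intro y n
    induction n with
    | zero => exact ReflTransGen.refl
    | succ n ih => exact ReflTransGen.head (Stp.dec (x := y + n) (q := none) trivial) ih
  rcases le_total y x with h | h
  · obtain ⟨n, rfl⟩ := Nat.exists_eq_add_of_le h
    exact up _ _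
  · obtain ⟨n, rfl⟩ := Nat.exists_eq_add_of_le h
    exact dn _ _

lemma Y_iff {Q : Type} {J K : ℕ → Q → Q → Prop} {p q₀ : Q} {x : ℕ} :
    (∃ y, ReflTransGen (Stp J K) (p, x) (q₀, y)) ↔
      ReflTransGen (Stp (E J q₀) (E K q₀)) (some p, x) (none, x) := by
  constructor
  · rintro ⟨y, h⟩
    have h1 : ReflTransGen (Stp (E J q₀) (E K q₀)) (some p, x) (some q₀, y) := by
      refine ReflTransGen.lift (fun c : Q × ℕ => ((some c.1 : Option Q), c.2)) ?_ _ _ h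
      intro a b hab
      cases hab with
      | inc h => exact Stp.inc h
      | dec h => exact Stp.dec h
    have h2 : Stp (E J q₀) (E K q₀) (some q₀, y) (none, y + 1) := Stp.inc rfl
    exact (h1.tail h2).trans (none_move _ _)
  · intro h
    have : ∀ c : Option Q × ℕ, ReflTransGen (Stp (E J q₀) (E K q₀)) (some p, x) c →
        (∃ y, ReflTransGen (Stp J K) (p, x) (q₀, y)) ∨
        ∃ r, c.1 = some r ∧ ReflTransGen (Stp J K) (p, x) (r, c.2) := by
      intro c hc
      induction hc with
      | refl => exact Or.inr ⟨p, rfl, ReflTransGen.refl⟩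
      | tail _ hs ih =>
        rcases ih with ih | ⟨r, hr, ih⟩
        · exact Or.inl ih
        cases hs with
        | @inc x a b hi =>
          obtain rfl : a = some r := hr
          cases b with
          | none => obtain rfl : r = q₀ := hi; exact Or.inl ⟨_, ih⟩
          | some b => exact Or.inr ⟨b, rfl, ih.tail (Stp.inc hi)⟩
        | @dec x a b hi =>
          obtain rfl : a = some r := hr
          cases b with
          | none => obtain rfl : r = q₀ := hi; exact Or.inl ⟨_, ih⟩
          | some b => exact Or.inr ⟨b, rfl, ih.tail (Stp.dec hi)⟩
    rcases this _ h with h | ⟨r, hr, _⟩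
    · exact h
    · cases hr

lemma E_const {Q : Type} {J : ℕ → Q → Q → Prop} {m : ℕ} (q₀ : Q)
    (h : ∀ x, m ≤ x → J x = J m) : ∀ x, m ≤ x → E J q₀ x = E J q₀ m := by
  intro x hx
  funext a b
  cases a <;> cases b <;> simp [E, h x hx]

end S8

/-- the sets `X_{p,q}` (counter values admitting an oscillation
from `p` back to the same value in `q`) and `Y_{p,q}` (counter values from
which `q` is reachable using only counter operations) are ultimately
periodic. -/
theorem stmt8 {α Q : Type} [Fintype α] [Nonempty α] [Fintype Q]
    (A : OCA Q α) (p q : Q) :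
    UltPeriodic {x : ℕ | ∃ ts cs, A.RunFrom (p, x) ts cs ∧
        cs.getLast? = some (q, x) ∧ ∀ τ ∈ ts, τ = Vis.inc ∨ τ = Vis.dec} ∧
    UltPeriodic {x : ℕ | ∃ x' : ℕ, ∃ ts cs, A.RunFrom (p, x) ts cs ∧
        cs.getLast? = some (q, x') ∧ ∀ τ ∈ ts, τ = Vis.inc ∨ τ = Vis.dec} := by
  have hI : ∀ x, A.m ≤ x → S8.AI A x = S8.AI A A.m := by
    intro x hx
    funext a b
    simp [S8.AI, hx]
  have hD : ∀ x, A.m ≤ x → S8.AD A x = S8.AD A A.m := by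
    intro x hx
    funext a b
    simp [S8.AD, Nat.le_succ_of_le hx]
  simp only [S8.run_iff, S8.Y_iff]
  exact ⟨S8.main hI hD p q, S8.main (S8.E_const q hI) (S8.E_const q hD) _ _⟩
end

section
/- For every OCA A over a nonempty finite alphabet Σ there exists an eOCA Ã over Σ such that L_obs(Ã) = L_obs(A) and, for every w ∈ L_obs(Ã), enc(w) ∈ L_vis(Ã). -/
variable {Q α : Type*}

namespace Stmt9

open Relation

def eps {Q α : Type} (A : OCA Q α) (c c' : Q × ℕ) : Prop :=
  A.step c Vis.inc c' ∨ A.step c Vis.dec c'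

def Reach {Q α : Type} (A : OCA Q α) : Q × ℕ → Q × ℕ → Prop := ReflTransGen (eps A)

def G {Q α : Type} (A : OCA Q α) (z : ℕ) (p q : Q) : Prop := Reach A (p, z) (q, z)

def E {Q α : Type} (A : OCA Q α) (z : ℕ) (p : Q) : Prop :=
  ∃ c, Reach A (p, z) c ∧ c.1 ∈ A.final

/-- offset steps, all tests equal to the threshold -/
def offStep {Q α : Type} (A : OCA Q α) (c c' : Q × ℕ) : Prop :=
  (c'.2 = c.2 + 1 ∧ (c.1, A.m, Vis.inc, c'.1) ∈ A.Δ) ∨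
  (c.2 = c'.2 + 1 ∧ (c.1, A.m, Vis.dec, c'.1) ∈ A.Δ)

def Off {Q α : Type} (A : OCA Q α) : Q × ℕ → Q × ℕ → Prop := ReflTransGen (offStep A)

def H {Q α : Type} (A : OCA Q α) (g : Q → Q → Prop) (p q : Q) : Prop :=
  Off A (p, 0) (q, 0) ∨
  ∃ r s, (p, A.m, Vis.dec, r) ∈ A.Δ ∧ g r s ∧ (s, A.m, Vis.inc, q) ∈ A.Δ

def Fn {Q α : Type} (A : OCA Q α) (s : (Q → Q → Prop) × (Q → Prop)) :
    (Q → Q → Prop) × (Q → Prop) :=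
  (ReflTransGen (H A s.1),
   fun p => ∃ r, ReflTransGen (H A s.1) p r ∧
    ((∃ c, Off A (r, 0) c ∧ c.1 ∈ A.final) ∨ ∃ r', (r, A.m, Vis.dec, r') ∈ A.Δ ∧ s.2 r'))

variable {Q α : Type} (A : OCA Q α)

lemma eps_iff (p q : Q) (x y : ℕ) : eps A (p, x) (q, y) ↔
    (y = x + 1 ∧ (p, min x A.m, Vis.inc, q) ∈ A.Δ) ∨
    (x = y + 1 ∧ (p, min x A.m, Vis.dec, q) ∈ A.Δ) := by
  unfold eps
  simp only [OCA.step]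
  constructor
  · rintro (h | ⟨h1, h2, h3⟩)
    · exact Or.inl h
    · exact Or.inr ⟨by omega, h3⟩
  · rintro (h | ⟨h1, h2⟩)
    · exact Or.inl h
    · exact Or.inr ⟨by omega, by omega, h2⟩

lemma off_reach {z : ℕ} (hz : A.m ≤ z) {c c' : Q × ℕ} (h : Off A c c') :
    Reach A (c.1, z + c.2) (c'.1, z + c'.2) := by
  induction h with
  | refl => exact ReflTransGen.refl
  | @tail b d _ h2 ih =>
    refine ReflTransGen.tail ih ?_
    rw [eps_iff]
    have : min (z + b.2) A.m = A.m := by omega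
    rw [this]
    rcases h2 with ⟨h, h'⟩ | ⟨h, h'⟩
    · exact Or.inl ⟨by omega, h'⟩
    · exact Or.inr ⟨by omega, h'⟩

lemma H_G {z : ℕ} (hz : A.m ≤ z) {p q : Q} (h : ReflTransGen (H A (G A z)) p q) :
    G A (z + 1) p q := by
  induction h with
  | refl => exact ReflTransGen.refl
  | @tail b d _ h2 ih =>
    refine ReflTransGen.trans ih ?_
    rcases h2 with h | ⟨r, s, h1, h2, h3⟩
    · exact off_reach A (z := z + 1) (by omega) h
    · refine ReflTransGen.head (b := (r, z)) ?_ (ReflTransGen.tail h2 ?_)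
      · rw [eps_iff]; right
        rw [show min (z + 1) A.m = A.m by omega]
        exact ⟨rfl, h1⟩
      · rw [eps_iff]; left
        rw [show min z A.m = A.m by omega]
        exact ⟨rfl, h3⟩

lemma decomp {z : ℕ} (hz : A.m ≤ z) {p : Q} {c : Q × ℕ} (h : Reach A (p, z + 1) c) :
    (∃ j, c.2 = z + 1 + j ∧ ∃ r, ReflTransGen (H A (G A z)) p r ∧ Off A (r, 0) (c.1, j)) ∨
    (c.2 ≤ z ∧ ∃ r r', ReflTransGen (H A (G A z)) p r ∧ (r, A.m, Vis.dec, r') ∈ A.Δ ∧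
      Reach A (r', z) c) := by
  induction h with
  | refl => exact Or.inl ⟨0, rfl, p, ReflTransGen.refl, ReflTransGen.refl⟩
  | @tail b d _ h2 ih =>
    obtain ⟨q, y⟩ := b
    obtain ⟨q', y'⟩ := d
    have h2' := h2
    rw [eps_iff] at h2
    rcases ih with ⟨j, hj, r, h3, h4⟩ | ⟨hy, r, r', h3, h4, h5⟩
    · simp only at hj h4
      rw [show min y A.m = A.m by omega] at h2
      rcases h2 with ⟨h, h'⟩ | ⟨h, h'⟩
      · exact Or.inl ⟨j + 1, by simp only; omega, r, h3, ReflTransGen.tail h4 (Or.inl ⟨rfl, h'⟩)⟩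
      · rcases j with _ | j
        · right
          obtain rfl : y' = z := by omega
          exact ⟨le_rfl, q, q', ReflTransGen.tail h3 (Or.inl h4), h', ReflTransGen.refl⟩
        · exact Or.inl ⟨j, by simp only; omega, r, h3, ReflTransGen.tail h4 (Or.inr ⟨rfl, h'⟩)⟩
    · simp only at hy
      by_cases hy' : y' ≤ z
      · exact Or.inr ⟨hy', r, r', h3, h4, ReflTransGen.tail h5 h2'⟩
      · rcases h2 with ⟨h, h'⟩ | ⟨h, h'⟩
        · obtain rfl : y = z := by omega
          rw [show min y A.m = A.m by omega] at h'
          exact Or.inl ⟨0, by simp only; omega, q',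
            ReflTransGen.tail h3 (Or.inr ⟨r', q, h4, h5, h'⟩), ReflTransGen.refl⟩
        · omega

lemma step_state {z : ℕ} (hz : A.m ≤ z) :
    (G A (z + 1), E A (z + 1)) = Fn A (G A z, E A z) := by
  unfold Fn
  refine Prod.ext ?_ ?_
  · funext p q
    refine propext ⟨fun h => ?_, fun h => H_G A hz h⟩
    rcases decomp A hz h with ⟨j, hj, r, h3, h4⟩ | ⟨hy, _⟩
    · simp only at hj
      obtain rfl : j = 0 := by omega
      exact ReflTransGen.tail h3 (Or.inl h4)
    · simp only at hy; omega
  · funext p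
    refine propext ⟨?_, ?_⟩
    · rintro ⟨c, hc, hF⟩
      rcases decomp A hz hc with ⟨j, hj, r, h3, h4⟩ | ⟨hy, r, r', h3, h4, h5⟩
      · exact ⟨r, h3, Or.inl ⟨_, h4, hF⟩⟩
      · exact ⟨r, h3, Or.inr ⟨r', h4, c, h5, hF⟩⟩
    · rintro ⟨r, h3, ⟨c, h4, hF⟩ | ⟨r', h4, c, h5, hF⟩⟩
      · exact ⟨_, ReflTransGen.trans (H_G A hz h3) (off_reach A (z := z + 1) (by omega) h4), hF⟩
      · refine ⟨c, ReflTransGen.trans (H_G A hz h3) (ReflTransGen.head (b := (r', z)) ?_ h5), hF⟩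
        rw [eps_iff]; right
        rw [show min (z + 1) A.m = A.m by omega]
        exact ⟨rfl, h4⟩

lemma periodic [Finite Q] : ∃ t d : ℕ, 1 ≤ d ∧ A.m ≤ t ∧ ∀ x, t ≤ x →
    G A x = G A (x + d) ∧ E A x = E A (x + d) := by
  obtain ⟨i, j, hij, h⟩ := Finite.exists_ne_map_eq_of_infinite
    (fun n : ℕ => (G A (A.m + n), E A (A.m + n)))
  wlog hlt : i < j generalizing i j
  · exact this j i hij.symm h.symm (by omega)
  refine ⟨A.m + i, j - i, by omega, by omega, fun x hx => ?_⟩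
  suffices hh : (G A x, E A x) = (G A (x + (j - i)), E A (x + (j - i))) by
    exact Prod.ext_iff.mp hh
  induction x, hx using Nat.le_induction with
  | base =>
    rw [show A.m + i + (j - i) = A.m + j by omega]
    exact h
  | succ n hn ih =>
    rw [step_state A (by omega), show n + 1 + (j - i) = n + (j - i) + 1 by omega,
      step_state A (by omega), ih]

def guard (p : Q) (σ : Vis α) (q : Q) : Set ℕ :=
  {z | ∃ r, G A z p r ∧ (r, min z A.m, σ, q) ∈ A.Δ}

lemma finVis [Finite α] : Finite (Vis α) := by
  refine Finite.of_surjective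
    (fun o : Option (Option α) => match o with
      | none => Vis.inc
      | some none => Vis.dec
      | some (some a) => Vis.sym a) ?_
  rintro (a | _ | _)
  · exact ⟨some (some a), rfl⟩
  · exact ⟨none, rfl⟩
  · exact ⟨some none, rfl⟩

def B [Finite Q] [Finite α] : EOCA Q α where
  init := A.init
  f q := {z | E A z q}
  hf q := by
    obtain ⟨t, d, hd, _, h⟩ := periodic A
    refine ⟨t, d, hd, fun x hx => ?_⟩
    simp only [Set.mem_setOf_eq]
    rw [(h x hx).2]
  Δ := Set.range (fun t : Q × Vis α × Q => (t.1, guard A t.1 t.2.1 t.2.2, t.2.1, t.2.2))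
  hΔfin := by
    have := finVis (α := α)
    exact Set.finite_range _
  hΔup := by
    rintro _ ⟨⟨p, σ, q⟩, rfl⟩
    obtain ⟨t, d, hd, hm, h⟩ := periodic A
    refine ⟨t, d, hd, fun x hx => ?_⟩
    simp only [guard, Set.mem_setOf_eq]
    rw [(h x hx).1, show min x A.m = A.m by omega, show min (x + d) A.m = A.m by omega]

variable [Finite Q] [Finite α]

lemma B_guard (p : Q) (σ : Vis α) (q : Q) (x : ℕ) :
    (∃ S, (p, S, σ, q) ∈ (B A).Δ ∧ x ∈ S) ↔ ∃ r, G A x p r ∧ (r, min x A.m, σ, q) ∈ A.Δ := by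
  constructor
  · rintro ⟨S, ⟨⟨p', σ', q'⟩, h⟩, hx⟩
    simp only [Prod.mk.injEq] at h
    obtain ⟨rfl, rfl, rfl, rfl⟩ := h
    exact hx
  · intro h
    exact ⟨guard A p σ q, ⟨(p, σ, q), rfl⟩, h⟩

lemma B_step (p q : Q) (x y : ℕ) (τ : Vis (α × ℕ)) :
    (B A).step (p, x) τ (q, y) ↔ ∃ r, G A x p r ∧ A.step (r, x) τ (q, y) := by
  rcases τ with ⟨a, z⟩ | _ | _ <;> simp only [EOCA.step, OCA.step, B_guard] <;> tauto

/-- acceptance from a configuration -/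
def AccA (c : Q × ℕ) (w : List (α × ℕ)) : Prop :=
  ∃ ts cs c', A.RunFrom c ts cs ∧ cs.getLast? = some c' ∧ c'.1 ∈ A.final ∧ obsMap ts = w

def AccB (c : Q × ℕ) (w : List (α × ℕ)) (v : List (Vis α)) : Prop :=
  ∃ ts cs c', (B A).RunFrom c ts cs ∧ cs.getLast? = some c' ∧ c'.2 ∈ (B A).f c'.1 ∧
    obsMap ts = w ∧ visMap ts = v

omit [Finite Q] [Finite α] in
lemma AccA_cons {c c' : Q × ℕ} {τ : Vis (α × ℕ)} {w} (h : A.step c τ c') (h' : AccA A c' w) :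
    AccA A c (obsMap [τ] ++ w) := by
  obtain ⟨ts, cs, d, h1, h2, h3, rfl⟩ := h'
  refine ⟨τ :: ts, c :: cs, d, .cons h h1, ?_, h3, ?_⟩
  · cases cs with
    | nil => simp at h2
    | cons a l => rw [List.getLast?_cons_cons]; exact h2
  · simp only [obsMap, ← List.filterMap_append]; rfl

lemma AccB_cons {c c' : Q × ℕ} {τ : Vis (α × ℕ)} {w v} (h : (B A).step c τ c')
    (h' : AccB A c' w v) : AccB A c (obsMap [τ] ++ w) (visOf τ :: v) := by
  obtain ⟨ts, cs, d, h1, h2, h3, rfl, rfl⟩ := h'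
  refine ⟨τ :: ts, c :: cs, d, .cons h h1, ?_, h3, ?_, rfl⟩
  · cases cs with
    | nil => simp at h2
    | cons a l => rw [List.getLast?_cons_cons]; exact h2
  · simp only [obsMap, ← List.filterMap_append]; rfl

omit [Finite Q] [Finite α] in
lemma AccA_reach {c c' : Q × ℕ} {w} (h : Reach A c c') (h' : AccA A c' w) : AccA A c w := by
  induction h using ReflTransGen.head_induction_on with
  | refl => exact h'
  | head h1 _ ih =>
    rcases h1 with h1 | h1
    · exact AccA_cons A h1 ih
    · exact AccA_cons A h1 ih

lemma B_to_A {c : Q × ℕ} {ts cs} (h : (B A).RunFrom c ts cs) :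
    ∀ c', cs.getLast? = some c' → c'.2 ∈ (B A).f c'.1 → AccA A c (obsMap ts) := by
  induction h with
  | nil c =>
    intro c' h1 h2
    simp only [List.getLast?_singleton, Option.some.injEq] at h1
    subst h1
    obtain ⟨d, hd, hF⟩ := h2
    exact AccA_reach A hd ⟨[], [d], d, .nil d, rfl, hF, rfl⟩
  | @cons c c1 τ ts cs hs hr ih =>
    intro c' h1 h2
    have hl : cs.getLast? = some c' := by
      cases hr with
      | nil => exact h1
      | cons _ h => cases h <;> (rw [List.getLast?_cons_cons] at h1; exact h1)
    have := ih c' hl h2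
    obtain ⟨p, x⟩ := c
    obtain ⟨q, y⟩ := c1
    rw [B_step] at hs
    obtain ⟨r, hr1, hr2⟩ := hs
    have h3 := AccA_reach A hr1 (AccA_cons A hr2 this)
    have e : obsMap (τ :: ts) = obsMap [τ] ++ obsMap ts := by
      simp only [obsMap, ← List.filterMap_append]; rfl
    rw [e]; exact h3

omit [Finite Q] [Finite α] in
lemma exit_up {p0 : Q} {x0 : ℕ} {c : Q × ℕ} (h : Reach A (p0, x0) c) : x0 < c.2 →
    ∃ r r', G A x0 p0 r ∧ A.step (r, x0) Vis.inc (r', x0 + 1) ∧ Reach A (r', x0 + 1) c := by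
  induction h with
  | refl => intro h; simp at h
  | @tail b d h1 h2 ih =>
    intro hd
    by_cases hb : x0 < b.2
    · obtain ⟨r, r', a1, a2, a3⟩ := ih hb
      exact ⟨r, r', a1, a2, ReflTransGen.tail a3 h2⟩
    · obtain ⟨q, y⟩ := b
      obtain ⟨q', y'⟩ := d
      simp only at hb hd
      rw [eps_iff] at h2
      rcases h2 with ⟨e, h2⟩ | ⟨e, h2⟩
      · obtain rfl : y = x0 := by omega
        subst e
        exact ⟨q, q', h1, ⟨rfl, h2⟩, ReflTransGen.refl⟩
      · omega

omit [Finite Q] [Finite α] in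
lemma exit_down {p0 : Q} {x0 : ℕ} {c : Q × ℕ} (h : Reach A (p0, x0 + 1) c) : c.2 < x0 + 1 →
    ∃ r r', G A (x0 + 1) p0 r ∧ A.step (r, x0 + 1) Vis.dec (r', x0) ∧ Reach A (r', x0) c := by
  induction h with
  | refl => intro h; simp at h
  | @tail b d h1 h2 ih =>
    intro hd
    by_cases hb : b.2 < x0 + 1
    · obtain ⟨r, r', a1, a2, a3⟩ := ih hb
      exact ⟨r, r', a1, a2, ReflTransGen.tail a3 h2⟩
    · obtain ⟨q, y⟩ := b
      obtain ⟨q', y'⟩ := d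
      simp only at hb hd
      rw [eps_iff] at h2
      rcases h2 with ⟨e, h2⟩ | ⟨e, h2⟩
      · omega
      · obtain rfl : y' = x0 := by omega
        subst e
        exact ⟨q, q', h1, ⟨by omega, rfl, h2⟩, ReflTransGen.refl⟩

lemma walk_up {p : Q} {w v} (k : ℕ) : ∀ (p0 : Q) (x0 : ℕ), Reach A (p0, x0) (p, x0 + k) →
    (∀ p', G A (x0 + k) p' p → AccB A (p', x0 + k) w v) →
    AccB A (p0, x0) w (List.replicate k Vis.inc ++ v) := by
  induction k with
  | zero => intro p0 x0 h h'; exact h' p0 h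
  | succ k ih =>
    intro p0 x0 h h'
    obtain ⟨r, r', h1, h2, h3⟩ := exit_up A h (by simp)
    have e : x0 + (k + 1) = x0 + 1 + k := by omega
    rw [e] at h3 h'
    exact AccB_cons A ((B_step A _ _ _ _ _).2 ⟨r, h1, h2⟩) (ih r' (x0 + 1) h3 h')

lemma walk_down {p : Q} {x : ℕ} {w v} (k : ℕ) : ∀ (p0 : Q), Reach A (p0, x + k) (p, x) →
    (∀ p', G A x p' p → AccB A (p', x) w v) →
    AccB A (p0, x + k) w (List.replicate k Vis.dec ++ v) := by
  induction k with
  | zero => intro p0 h h'; exact h' p0 h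
  | succ k ih =>
    intro p0 h h'
    obtain ⟨r, r', h1, h2, h3⟩ := exit_down A (x0 := x + k) h (by simp only; omega)
    exact AccB_cons A ((B_step A _ _ _ _ _).2 ⟨r, h1, h2⟩) (ih r' h3 h')

lemma A_to_B {c : Q × ℕ} {ts cs} (h : A.RunFrom c ts cs) :
    ∀ c', cs.getLast? = some c' → c'.1 ∈ A.final → ∀ c0, Reach A c0 c →
      AccB A c0 (obsMap ts) (encFrom c0.2 (obsMap ts)) := by
  induction h with
  | nil c =>
    intro c' h1 h2 c0 h0
    simp only [List.getLast?_singleton, Option.some.injEq] at h1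
    subst h1
    exact ⟨[], [c0], c0, .nil c0, rfl, ⟨c, h0, h2⟩, rfl, rfl⟩
  | @cons c c1 τ ts cs hs hr ih =>
    intro c' h1 h2 c0 h0
    have hl : cs.getLast? = some c' := by
      cases hr with
      | nil => exact h1
      | cons _ h => cases h <;> (rw [List.getLast?_cons_cons] at h1; exact h1)
    have ih := ih c' hl h2
    rcases τ with ⟨a, z⟩ | _ | _
    · obtain ⟨p, x⟩ := c
      obtain ⟨q, y⟩ := c1
      obtain ⟨p0, x0⟩ := c0
      obtain ⟨e1, e2, _⟩ := id hs
      subst e1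
      subst e2
      have ih := ih (q, y) ReflTransGen.refl
      have key : ∀ p', G A y p' p → AccB A (p', y) ((a, y) :: obsMap ts)
          (Vis.sym a :: encFrom y (obsMap ts)) := fun p' hp' =>
        AccB_cons A ((B_step A _ _ _ _ _).2 ⟨p, hp', hs⟩) ih
      change AccB A (p0, x0) ((a, y) :: obsMap ts) (encFrom x0 ((a, y) :: obsMap ts))
      rw [encFrom]
      split_ifs with hle
      · obtain ⟨k, rfl⟩ := Nat.exists_eq_add_of_le hle
        rw [Nat.add_sub_cancel_left]
        exact walk_up A k p0 x0 h0 key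
      · obtain ⟨k, rfl⟩ := Nat.exists_eq_add_of_le (le_of_not_ge hle)
        rw [Nat.add_sub_cancel_left]
        exact walk_down A k p0 h0 key
    · exact ih c0 (ReflTransGen.tail h0 (Or.inl hs))
    · exact ih c0 (ReflTransGen.tail h0 (Or.inr hs))

end Stmt9

/-- every OCA can be turned into an eOCA with the same
observability semantics whose visibly semantics contains the encoding of
every word of its observability semantics. -/
theorem stmt9 {α Q : Type} [Fintype α] [Nonempty α] [Fintype Q] (A : OCA Q α) :
    ∃ (Q' : Type) (_ : Fintype Q') (B : EOCA Q' α),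
      B.Lobs = A.Lobs ∧ ∀ w ∈ B.Lobs, enc w ∈ B.Lvis := by
  have h1 : ∀ w ∈ (Stmt9.B A).Lobs, w ∈ A.Lobs := by
    rintro w ⟨ts, ⟨cs, c, hr, hl, hc⟩, rfl⟩
    obtain ⟨ts', cs', c', a1, a2, a3, a4⟩ := Stmt9.B_to_A A hr c hl hc
    exact ⟨ts', ⟨cs', c', a1, a2, a3⟩, a4⟩
  have h2 : ∀ w ∈ A.Lobs, w ∈ (Stmt9.B A).Lobs ∧ enc w ∈ (Stmt9.B A).Lvis := by
    rintro w ⟨ts, ⟨cs, c, hr, hl, hc⟩, rfl⟩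
    obtain ⟨ts', cs', c', a1, a2, a3, a4, a5⟩ :=
      Stmt9.A_to_B A hr c hl hc _ Relation.ReflTransGen.refl
    exact ⟨⟨ts', ⟨cs', c', a1, a2, a3⟩, a4⟩, ⟨ts', ⟨cs', c', a1, a2, a3⟩, a5⟩⟩
  exact ⟨Q, inferInstance, Stmt9.B A, Set.ext fun w => ⟨h1 w, fun h => (h2 w h).1⟩,
    fun w hw => (h2 w (h1 w hw)).2⟩
end

section
/- Let (c_1,d_1),…,(c_n,d_n) be finitely many pairs of natural numbers (with n ≥ 1) and let M = max_i c_i + 2. Then there exist a deterministic M-OCA B over Σ in which every state is final and a map λ from the states of B to subsets of {1,…,n} such that, for every run of B ending in a configuration (q,x), λ(q) = {i ∈ {1,…,n} : x ∈ {c_i + d_i·k : k ∈ ℕ}}. -/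
variable {Q α : Type*}

/-- next-state function -/
def trNext {α : Type} (C D : ℕ) (q : Fin (C + 2) × ZMod D) (k : ℕ) :
    Vis α → Fin (C + 2) × ZMod D
  | Vis.sym _ => q
  | Vis.inc => (⟨min (k + 1) (C + 1), by omega⟩, q.2 + 1)
  | Vis.dec => (⟨min (k - 1) (C + 1), by omega⟩, q.2 - 1)

/-- state associated with a counter value -/
def trSt (C D x : ℕ) : Fin (C + 2) × ZMod D := (⟨min x (C + 1), by omega⟩, (x : ZMod D))

/-- the automaton -/
def trOCA (α : Type) (C D : ℕ) : OCA (Fin (C + 2) × ZMod D) α where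
  init := trSt C D 0
  final := Set.univ
  m := C + 2
  Δ := {t | t.2.1 ≤ C + 2 ∧ t.2.2.2 = trNext C D t.1 t.2.1 t.2.2.1}
  valid := fun _ h => h.1

theorem trStep {α : Type} (C D : ℕ) (x : ℕ) (τ : Vis (α × ℕ)) (q' : Fin (C + 2) × ZMod D) (x' : ℕ)
    (h : (trOCA α C D).step (trSt C D x, x) τ (q', x')) : q' = trSt C D x' := by
  rcases τ with ⟨a, y⟩ | _ | _
  · obtain ⟨_, rfl, _, h⟩ := h
    exact h
  · obtain ⟨rfl, _, h⟩ := h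
    simp only [trOCA, trNext] at h
    rw [h]
    simp only [trSt, Prod.mk.injEq, Fin.mk.injEq]
    refine ⟨by omega, by push_cast; rfl⟩
  · obtain ⟨h1, rfl, _, h⟩ := h
    simp only [trOCA, trNext] at h
    rw [h]
    simp only [trSt, Prod.mk.injEq, Fin.mk.injEq]
    refine ⟨by omega, by push_cast [Nat.cast_sub h1]; rfl⟩

theorem trRun {α : Type} (C D : ℕ) (p : (Fin (C + 2) × ZMod D) × ℕ) (ts : List (Vis (α × ℕ)))
    (cs : List ((Fin (C + 2) × ZMod D) × ℕ))
    (h : (trOCA α C D).RunFrom p ts cs) (hp : p.1 = trSt C D p.2) :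
    ∀ r ∈ cs, r.1 = trSt C D r.2 := by
  induction h with
  | nil c => simpa using hp
  | @cons c c' τ ts cs hs _ ih =>
    have h2 : c'.1 = trSt C D c'.2 := by
      obtain ⟨q, x⟩ := c
      obtain ⟨q', x'⟩ := c'
      simp only at hp
      subst hp
      exact trStep C D x τ q' x' hs
    intro r hr
    rcases List.mem_cons.1 hr with rfl | hr
    · exact hp
    · exact ih h2 r hr

theorem trMem (C D c d x y : ℕ) (hc : c ≤ C) (hd : d = 0 ∨ d ∣ D)
    (h : trSt C D x = trSt C D y) (hx : ∃ k, x = c + d * k) : ∃ k, y = c + d * k := by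
  simp only [trSt, Prod.mk.injEq, Fin.mk.injEq] at h
  obtain ⟨h1, h2⟩ := h
  obtain ⟨k, rfl⟩ := hx
  rcases hd with rfl | hd
  · exact ⟨0, by simp at h1 ⊢; omega⟩
  · rw [ZMod.natCast_eq_natCast_iff] at h2
    have h3 : c ≡ y [MOD d] := by
      have := h2.of_dvd hd
      exact (show c ≡ c + d * k [MOD d] by simp [Nat.ModEq]).trans this
    have hcy : c ≤ y := by
      have : c ≤ c + d * k := Nat.le_add_right _ _
      omega
    obtain ⟨l, hl⟩ := (Nat.modEq_iff_dvd' hcy).1 h3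
    exact ⟨l, by omega⟩

theorem stmt10 {α : Type} [Fintype α] [Nonempty α] (n : ℕ) (hn : 1 ≤ n)
    (c d : Fin n → ℕ) :
    ∃ (Q : Type) (_ : Fintype Q) (B : OCA Q α) (lam : Q → Set (Fin n)),
      B.m = Finset.univ.sup c + 2 ∧
      B.final = Set.univ ∧
      B.Deterministic ∧
      ∀ ts cs (q : Q) (x : ℕ), B.RunFrom (B.init, 0) ts cs →
        cs.getLast? = some (q, x) →
        lam q = {i : Fin n | ∃ k : ℕ, x = c i + d i * k} := by
  set C := Finset.univ.sup c with hC
  let D := ∏ i, (if d i = 0 then 1 else d i)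
  have hD : D ≠ 0 := Finset.prod_ne_zero_iff.2 fun i _ => by split_ifs <;> simp_all
  haveI : NeZero D := ⟨hD⟩
  have hdvd : ∀ i, d i = 0 ∨ d i ∣ D := fun i => by
    by_cases h : d i = 0
    · exact Or.inl h
    · right
      have := Finset.dvd_prod_of_mem (fun i => if d i = 0 then 1 else d i) (Finset.mem_univ i)
      simpa [h] using this
  have hc : ∀ i, c i ≤ C := fun i => Finset.le_sup (Finset.mem_univ i)
  refine ⟨Fin (C + 2) × ZMod D, inferInstance, trOCA α C D,
    fun q => {i | ∃ x, trSt C D x = q ∧ ∃ k : ℕ, x = c i + d i * k}, rfl, rfl, ?_, ?_⟩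
  · intro q k σ hk
    exact ⟨trNext C D q k σ, ⟨hk, rfl⟩, fun q' h => h.2⟩
  · intro ts cs q x hr hl
    have hq : q = trSt C D x := trRun C D _ ts cs hr rfl _ (List.mem_of_getLast? hl)
    subst hq
    ext i
    constructor
    · rintro ⟨y, hy, hk⟩
      exact trMem C D _ _ y x (hc i) (hdvd i) hy hk
    · intro hk
      exact ⟨x, rfl, hk⟩
end

section
/- For every eOCA A over a nonempty finite alphabet Σ there exists a deterministic OCA A' over Σ such that L_oca(A') = L_oca(A), L_vis(A') = L_vis(A), and L_obs(A') = L_obs(A). -/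
variable {Q α : Type*}

theorem up_iter {S : Set ℕ} {t d : ℕ} (h : ∀ x : ℕ, t ≤ x → (x ∈ S ↔ x + d ∈ S)) (n : ℕ) :
    ∀ x : ℕ, t ≤ x → (x ∈ S ↔ x + d * n ∈ S) := by
  induction n with
  | zero => intro x _; simp
  | succ n ih =>
    intro x hx
    rw [ih x hx, h (x + d * n) (by omega), Nat.mul_succ, Nat.add_assoc]

theorem up_common {F : Set (Set ℕ)} (hF : F.Finite) (h : ∀ S ∈ F, UltPeriodic S) :
    ∃ t d : ℕ, 1 ≤ d ∧ ∀ S ∈ F, ∀ x : ℕ, t ≤ x → (x ∈ S ↔ x + d ∈ S) := by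
  induction F, hF using Set.Finite.induction_on with
  | empty => exact ⟨0, 1, le_refl _, by simp⟩
  | @insert S F _ _ ih =>
    obtain ⟨t, d, hd, H⟩ := ih (fun S hS => h S (Set.mem_insert_of_mem _ hS))
    obtain ⟨t', d', hd', H'⟩ := h S (Set.mem_insert _ _)
    refine ⟨t + t', d * d', Nat.mul_pos hd hd', ?_⟩
    intro T hT x hx
    rcases hT with rfl | hT
    · rw [Nat.mul_comm]; exact up_iter H' d x (by omega)
    · exact up_iter (H T hT) d' x (by omega)

def memb (t d : ℕ) (r : ZMod d) (k : Fin (t + 1)) (S : Set ℕ) : Prop :=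
  ∃ x : ℕ, (x : ZMod d) = r ∧ min x t = k ∧ x ∈ S

def cl (t x : ℕ) : Fin (t + 1) := ⟨min x t, by omega⟩

theorem memb_aux {S : Set ℕ} {t d : ℕ} (h : ∀ x : ℕ, t ≤ x → (x ∈ S ↔ x + d ∈ S))
    {x y : ℕ} (hxy : x ≤ y) (hm : min x t = min y t) (hr : (x : ZMod d) = (y : ZMod d)) :
    x ∈ S ↔ y ∈ S := by
  by_cases hx : t ≤ x
  · rw [ZMod.natCast_eq_natCast_iff, Nat.modEq_iff_dvd' hxy] at hr
    obtain ⟨n, hn⟩ := hr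
    rw [up_iter h n x hx, ← hn, Nat.add_sub_cancel' hxy]
  · have : x = y := by omega
    rw [this]

theorem memb_iff {S : Set ℕ} {t d : ℕ} (h : ∀ x : ℕ, t ≤ x → (x ∈ S ↔ x + d ∈ S)) (x : ℕ) :
    memb t d (x : ZMod d) (cl t x) S ↔ x ∈ S := by
  constructor
  · rintro ⟨y, hr, hm, hy⟩
    rcases le_total x y with hxy | hxy
    · exact (memb_aux h hxy hm.symm hr.symm).2 hy
    · exact (memb_aux h hxy hm hr).1 hy
  · intro hx
    exact ⟨x, rfl, rfl, hx⟩

def nextR {α : Type} {d : ℕ} (r : ZMod d) : Vis α → ZMod d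
  | Vis.sym _ => r
  | Vis.inc => r + 1
  | Vis.dec => r - 1

def nextJ {α : Type} (j : ℕ) : Vis α → ℕ
  | Vis.sym _ => j
  | Vis.inc => j + 1
  | Vis.dec => j - 1

def dlt {α Q : Type} (A : EOCA Q α) (t d : ℕ) (s : Set Q × ZMod d × Fin (t + 1)) (j : ℕ)
    (σ : Vis α) : Set Q × ZMod d × Fin (t + 1) :=
  ({q' | ∃ q ∈ s.1, ∃ S, (q, S, σ, q') ∈ A.Δ ∧ memb t d s.2.1 s.2.2 S},
    nextR s.2.1 σ, cl t (nextJ j σ))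

def detA {α Q : Type} (A : EOCA Q α) (t d : ℕ) : OCA (Set Q × ZMod d × Fin (t + 1)) α where
  init := ({A.init}, ((0 : ℕ) : ZMod d), cl t 0)
  final := {s | ∃ q ∈ s.1, memb t d s.2.1 s.2.2 (A.f q)}
  m := t + 1
  Δ := {e | e.2.1 ≤ t + 1 ∧ e.2.2.2 = dlt A t d e.1 e.2.1 e.2.2.1}
  valid := fun _ h => h.1

def accO {α Q : Type} (A : OCA Q α) : List (Vis (α × ℕ)) → Q × ℕ → Prop
  | [], c => c.1 ∈ A.final
  | τ :: ts, c => ∃ c', A.step c τ c' ∧ accO A ts c'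

def accE {α Q : Type} (A : EOCA Q α) : List (Vis (α × ℕ)) → Q × ℕ → Prop
  | [], c => c.2 ∈ A.f c.1
  | τ :: ts, c => ∃ c', A.step c τ c' ∧ accE A ts c'

theorem runO_ne {α Q : Type} {A : OCA Q α} {c ts cs} (h : A.RunFrom c ts cs) : cs ≠ [] := by
  cases h <;> simp

theorem runE_ne {α Q : Type} {A : EOCA Q α} {c ts cs} (h : A.RunFrom c ts cs) : cs ≠ [] := by
  cases h <;> simp

theorem accO_iff {α Q : Type} (A : OCA Q α) (ts) : ∀ c,
    accO A ts c ↔ ∃ cs e, A.RunFrom c ts cs ∧ cs.getLast? = some e ∧ e.1 ∈ A.final := by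
  induction ts with
  | nil =>
    intro c
    constructor
    · intro h; exact ⟨[c], c, .nil c, rfl, h⟩
    · rintro ⟨cs, e, h, h1, h2⟩
      cases h
      simp at h1; subst h1; exact h2
  | cons τ ts ih =>
    intro c
    constructor
    · rintro ⟨c', hs, h⟩
      obtain ⟨cs, e, h, h1, h2⟩ := (ih c').1 h
      refine ⟨c :: cs, e, .cons hs h, ?_, h2⟩
      rw [List.getLast?_cons, h1]; rfl
    · rintro ⟨cs, e, h, h1, h2⟩
      cases h with
      | cons hs h =>
        refine ⟨_, hs, (ih _).2 ⟨_, e, h, ?_, h2⟩⟩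
        have := runO_ne h
        rw [← h1, List.getLast?_cons_of_ne_nil this]

theorem accE_iff {α Q : Type} (A : EOCA Q α) (ts) : ∀ c,
    accE A ts c ↔ ∃ cs e, A.RunFrom c ts cs ∧ cs.getLast? = some e ∧ e.2 ∈ A.f e.1 := by
  induction ts with
  | nil =>
    intro c
    constructor
    · intro h; exact ⟨[c], c, .nil c, rfl, h⟩
    · rintro ⟨cs, e, h, h1, h2⟩
      cases h
      simp at h1; subst h1; exact h2
  | cons τ ts ih =>
    intro c
    constructor
    · rintro ⟨c', hs, h⟩
      obtain ⟨cs, e, h, h1, h2⟩ := (ih c').1 h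
      refine ⟨c :: cs, e, .cons hs h, ?_, h2⟩
      rw [List.getLast?_cons, h1]; rfl
    · rintro ⟨cs, e, h, h1, h2⟩
      cases h with
      | cons hs h =>
        refine ⟨_, hs, (ih _).2 ⟨_, e, h, ?_, h2⟩⟩
        have := runE_ne h
        rw [← h1, List.getLast?_cons_of_ne_nil this]

/-- counter part of a step, shared by both models -/
def cstep {α : Type} (x : ℕ) : Vis (α × ℕ) → Prop
  | Vis.inc => True
  | Vis.dec => 1 ≤ x
  | Vis.sym (_, y) => y = x

theorem stepO_iff {α Q : Type} (A : OCA Q α) (q q' : Q) (x x' : ℕ) (τ : Vis (α × ℕ)) :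
    A.step (q, x) τ (q', x') ↔
      cstep x τ ∧ x' = nextJ x (visOf τ) ∧ (q, min x A.m, visOf τ, q') ∈ A.Δ := by
  rcases τ with ⟨a, y⟩ | _ | _ <;> simp [OCA.step, cstep, nextJ, visOf]

theorem stepE_iff {α Q : Type} (A : EOCA Q α) (q q' : Q) (x x' : ℕ) (τ : Vis (α × ℕ)) :
    A.step (q, x) τ (q', x') ↔
      cstep x τ ∧ x' = nextJ x (visOf τ) ∧ ∃ S, (q, S, visOf τ, q') ∈ A.Δ ∧ x ∈ S := by
  rcases τ with ⟨a, y⟩ | _ | _ <;> simp [EOCA.step, cstep, nextJ, visOf]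

theorem nextR_eq {α : Type} {d x : ℕ} {τ : Vis (α × ℕ)} (h : cstep x τ) :
    nextR (x : ZMod d) (visOf τ) = ((nextJ x (visOf τ) : ℕ) : ZMod d) := by
  rcases τ with ⟨a, y⟩ | _ | _
  · rfl
  · simp [nextR, nextJ, visOf]
  · simp only [cstep] at h
    simp [nextR, nextJ, visOf, Nat.cast_sub h]

theorem cl_eq {α : Type} (t x : ℕ) (σ : Vis α) :
    cl t (nextJ (min x (t + 1)) σ) = cl t (nextJ x σ) := by
  rcases σ with a | _ | _ <;> simp only [cl, nextJ, Fin.mk.injEq] <;> omega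

theorem main_inv {α Q : Type} (A : EOCA Q α) (t d : ℕ)
    (hf : ∀ q, ∀ x : ℕ, t ≤ x → (x ∈ A.f q ↔ x + d ∈ A.f q))
    (hD : ∀ e ∈ A.Δ, ∀ x : ℕ, t ≤ x → (x ∈ e.2.1 ↔ x + d ∈ e.2.1))
    (ts : List (Vis (α × ℕ))) : ∀ (P : Set Q) (x : ℕ),
    accO (detA A t d) ts ((P, (x : ZMod d), cl t x), x) ↔ ∃ q ∈ P, accE A ts (q, x) := by
  induction ts with
  | nil =>
    intro P x
    simp only [accO, accE, detA, Set.mem_setOf_eq, memb_iff (hf _)]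
  | cons τ ts ih =>
    intro P x
    have key : ∀ s', (∃ x', (detA A t d).step ((P, (x : ZMod d), cl t x), x) τ (s', x')) →
        cstep x τ := by
      rintro s' ⟨x', h⟩
      exact ((stepO_iff _ _ _ _ _ _).1 h).1
    constructor
    · rintro ⟨⟨s', x'⟩, hs, h⟩
      obtain ⟨hc, rfl, -, hs⟩ := (stepO_iff _ _ _ _ _ _).1 hs
      change s' = dlt A t d (P, (x : ZMod d), cl t x) (min x (t + 1)) (visOf τ) at hs
      subst hs
      simp only [dlt, nextR_eq hc, cl_eq] at h
      obtain ⟨q', ⟨q, hq, S, hS, hm⟩, h'⟩ := (ih _ _).1 h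
      exact ⟨q, hq, (q', _), (stepE_iff _ _ _ _ _ _).2
        ⟨hc, rfl, S, hS, (memb_iff (hD _ hS) x).1 hm⟩, h'⟩
    · rintro ⟨q, hq, ⟨q', x'⟩, hs, h⟩
      obtain ⟨hc, rfl, S, hS, hx⟩ := (stepE_iff _ _ _ _ _ _).1 hs
      refine ⟨(dlt A t d (P, (x : ZMod d), cl t x) (min x (t + 1)) (visOf τ), _),
        (stepO_iff _ _ _ _ _ _).2 ⟨hc, rfl, Nat.min_le_right _ _, rfl⟩, ?_⟩
      simp only [dlt, nextR_eq hc, cl_eq]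
      exact (ih _ _).2 ⟨q', ⟨q, hq, S, hS, (memb_iff (hD _ hS) x).2 hx⟩, h⟩

/-- every eOCA can be transformed into a deterministic OCA with
the same classical, visibly and observability semantics. -/
theorem stmt11 {α Q : Type} [Fintype α] [Nonempty α] [Fintype Q] (A : EOCA Q α) :
    ∃ (Q' : Type) (_ : Fintype Q') (A' : OCA Q' α),
      A'.Deterministic ∧
      A'.Loca = A.Loca ∧ A'.Lvis = A.Lvis ∧ A'.Lobs = A.Lobs := by
  obtain ⟨t, d, hd, H⟩ := up_common (F := Set.range A.f ∪ (fun e => e.2.1) '' A.Δ)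
    ((Set.finite_range _).union (A.hΔfin.image _)) (by
      rintro S (⟨q, rfl⟩ | ⟨e, he, rfl⟩)
      · exact A.hf q
      · exact A.hΔup e he)
  haveI : NeZero d := ⟨by omega⟩
  have hacc : ∀ ts, (detA A t d).AccTrace ts ↔ A.AccTrace ts := by
    intro ts
    have h := main_inv A t d (fun q => H _ (Or.inl ⟨q, rfl⟩))
      (fun e he => H _ (Or.inr ⟨e, he, rfl⟩)) ts {A.init} 0
    simp only [Set.mem_singleton_iff, exists_eq_left] at h
    exact ((accO_iff _ ts _).symm.trans h).trans (accE_iff _ ts _)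
  refine ⟨Set Q × ZMod d × Fin (t + 1), Fintype.ofFinite _, detA A t d, ?_, ?_, ?_, ?_⟩
  · intro q k σ hk
    exact ⟨dlt A t d q k σ, ⟨hk, rfl⟩, fun q' h => h.2⟩
  · simp only [OCA.Loca, EOCA.Loca, hacc]
  · simp only [OCA.Lvis, EOCA.Lvis, hacc]
  · simp only [OCA.Lobs, EOCA.Lobs, hacc]
end

section
/- Let A be a deterministic OCA over a nonempty finite alphabet Σ with L_vis(A) ⊆ Enc_Σ. Then for every w ∈ (Σ×ℕ)*, w ∈ L_obs(A) if and only if the unique run ρ of A with vis(trace(ρ)) = enc(w) is accepting. -/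
variable {Q α : Type*}

def decodeV {α : Type*} : ℕ → List (Vis α) → List (α × ℕ)
  | _, [] => []
  | x, Vis.inc :: l => decodeV (x + 1) l
  | x, Vis.dec :: l => decodeV (x - 1) l
  | x, Vis.sym a :: l => (a, x) :: decodeV x l

theorem decodeV_inc {α : Type*} (n x : ℕ) (l : List (Vis α)) :
    decodeV x (List.replicate n Vis.inc ++ l) = decodeV (x + n) l := by
  induction n generalizing x with
  | zero => simp
  | succ n ih =>
    simp only [List.replicate_succ, List.cons_append, decodeV, ih]
    congr 1
    omega

theorem decodeV_dec {α : Type*} (n x : ℕ) (l : List (Vis α)) :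
    decodeV x (List.replicate n Vis.dec ++ l) = decodeV (x - n) l := by
  induction n generalizing x with
  | zero => simp
  | succ n ih =>
    simp only [List.replicate_succ, List.cons_append, decodeV, ih]
    congr 1
    omega

theorem decodeV_encFrom {α : Type*} (w : List (α × ℕ)) (x : ℕ) :
    decodeV x (encFrom x w) = w := by
  induction w generalizing x with
  | nil => rfl
  | cons p w ih =>
    obtain ⟨a, y⟩ := p
    unfold encFrom
    split_ifs with h
    · rw [decodeV_inc, show x + (y - x) = y by omega]
      simp [decodeV, ih]
    · rw [decodeV_dec, show x - (x - y) = y by omega]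
      simp [decodeV, ih]

theorem obsMap_run {α Q : Type*} (A : OCA Q α) {c : Q × ℕ} {ts : List (Vis (α × ℕ))}
    {cs : List (Q × ℕ)} (h : A.RunFrom c ts cs) :
    obsMap ts = decodeV c.2 (visMap ts) := by
  induction h with
  | nil c => rfl
  | @cons c c' τ ts cs hs _ ih =>
    obtain ⟨q, x⟩ := c
    obtain ⟨q', x'⟩ := c'
    rcases τ with ⟨a, y⟩ | _ | _
    · obtain ⟨rfl, rfl, _⟩ := hs
      simpa [obsMap, visMap, visOf, decodeV] using ih
    · obtain ⟨rfl, _⟩ := hs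
      simpa [obsMap, visMap, visOf, decodeV] using ih
    · obtain ⟨_, rfl, _⟩ := hs
      simpa [obsMap, visMap, visOf, decodeV] using ih

/-- for a deterministic OCA whose visibly semantics consists of
valid encodings, a word `w` belongs to the observability semantics iff the
(unique) run whose visibly trace is `enc w` is accepting. -/
theorem stmt13 {α Q : Type} [Fintype α] [Nonempty α] [Fintype Q]
    (A : OCA Q α) (hdet : A.Deterministic) (henc : A.Lvis ⊆ EncSet α) :
    ∀ w : List (α × ℕ),
      w ∈ A.Lobs ↔
        ∃ ts cs, A.RunFrom (A.init, 0) ts cs ∧ visMap ts = enc w ∧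
          ∃ c, cs.getLast? = some c ∧ c.1 ∈ A.final := by
  intro w
  constructor
  · rintro ⟨ts, ⟨cs, c, hr, hl, hf⟩, rfl⟩
    obtain ⟨w', hw'⟩ := henc ⟨ts, ⟨cs, c, hr, hl, hf⟩, rfl⟩
    refine ⟨ts, cs, hr, ?_, c, hl, hf⟩
    rw [obsMap_run A hr, ← hw']
    simp only [enc, decodeV_encFrom]
  · rintro ⟨ts, cs, hr, hv, c, hl, hf⟩
    refine ⟨ts, ⟨cs, c, hr, hl, hf⟩, ?_⟩
    rw [obsMap_run A hr, hv]
    exact decodeV_encFrom w 0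
end
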